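/- Fix z > 0 and let γ : [0, z] → [0, ∞) be a bounded probability density (∫₀^z γ(x) dx = 1) that is continuous at z. Let J be a random variable with density γ, let B be a standard Brownian motion independent of J, let τ_J := inf{t ≥ 0 : B(t) = J − z}, and let R be a BES(3) process independent of (J, B). Define Z̃(t) = z + B(t) for t ∈ [0, τ_J] and Z̃(τ_J + t) = J + R(t) for t ≥ 0. Then for every twice continuously differentiable function φ with compact support contained in (0, ∞), lim_{t → 0+} t^{−1} E[φ(Z̃(t)) − φ(z)] = (1/2) φ''(z) + γ(z) φ'(z). -/

import Mathlib

open MeasureTheory ProbabilityTheory Set Filter Topology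
open scoped Classical

noncomputable section

/-- The σ-algebra generated by a process `Y` up to time `t` (over times in `[0, t]`),
i.e. `σ(Y u : 0 ≤ u ≤ t)`. -/
def natSigma {Ω E : Type*} [MeasurableSpace E] (Y : ℝ → Ω → E) (t : ℝ) :
    MeasurableSpace Ω :=
  ⨆ u : Set.Icc (0 : ℝ) t, MeasurableSpace.comap (Y u) inferInstance

/-- The σ-algebra generated by the whole (nonnegative-time) process `Y`. -/
def procSigma {Ω E : Type*} [MeasurableSpace E] (Y : ℝ → Ω → E) :
    MeasurableSpace Ω :=
  ⨆ u : Set.Ici (0 : ℝ), MeasurableSpace.comap (Y u) inferInstance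

/-- `B` is a standard one-dimensional Brownian motion (with `B 0 = 0`) under `P`:
measurable, a.s. starting at `0` and continuous on `[0, ∞)`, with Gaussian increments
`B t - B s ~ N(0, t - s)` that are independent of the past. -/
structure IsBrownianMotion {Ω : Type*} [MeasurableSpace Ω] (P : Measure Ω)
    (B : ℝ → Ω → ℝ) : Prop where
  measurable : ∀ t : ℝ, Measurable (B t)
  init : ∀ᵐ ω ∂P, B 0 ω = 0
  cont : ∀ᵐ ω ∂P, ContinuousOn (fun t => B t ω) (Set.Ici 0)
  incr_law : ∀ s t : ℝ, 0 ≤ s → s ≤ t →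
    P.map (fun ω => B t ω - B s ω) = gaussianReal 0 (Real.toNNReal (t - s))
  incr_indep : ∀ s t : ℝ, 0 ≤ s → s ≤ t →
    Indep (MeasurableSpace.comap (fun ω => B t ω - B s ω) inferInstance)
      (natSigma B s) P

/-- `W` is a standard `n`-dimensional Brownian motion started at the origin:
its coordinate processes are independent standard one-dimensional Brownian motions. -/
def IsBrownianMotionND {Ω : Type*} [MeasurableSpace Ω] (P : Measure Ω) {n : ℕ}
    (W : ℝ → Ω → EuclideanSpace ℝ (Fin n)) : Prop :=
  (∀ i : Fin n, IsBrownianMotion P (fun t ω => W t ω i)) ∧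
  iIndep (fun i : Fin n => procSigma (fun t ω => W t ω i)) P

/-- The least concave majorant on `[0, ∞)` of a function `f : ℝ → ℝ`:
`t ↦ inf { c t | c concave on [0,∞) and c ≥ f on [0,∞) }`. -/
def concaveMajorant (f : ℝ → ℝ) (t : ℝ) : ℝ :=
  sInf {y | ∃ c : ℝ → ℝ, ConcaveOn ℝ (Set.Ici 0) c ∧ (∀ u, 0 ≤ u → f u ≤ c u) ∧ y = c t}

/-- Right-hand derivative. -/
def rightDeriv (f : ℝ → ℝ) (t : ℝ) : ℝ := derivWithin f (Set.Ioi t) t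

/-- `D(t)`: the first vertex (contact point of the concave majorant) at or after time `t`. -/
def firstVertex (f : ℝ → ℝ) (t : ℝ) : ℝ :=
  sInf {u | t ≤ u ∧ concaveMajorant f u = f u}

/-- The concave majorant process `K` of `B`. -/
def Kproc {Ω : Type*} (B : ℝ → Ω → ℝ) (t : ℝ) (ω : Ω) : ℝ :=
  concaveMajorant (fun u => B u ω) t

/-- The process `X = 2K - B`. -/
def Xproc {Ω : Type*} (B : ℝ → Ω → ℝ) (t : ℝ) (ω : Ω) : ℝ :=
  2 * Kproc B t ω - B t ω

/-- The right-hand slope process `K'` of the concave majorant. -/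
def Kslope {Ω : Type*} (B : ℝ → Ω → ℝ) (t : ℝ) (ω : Ω) : ℝ :=
  rightDeriv (fun u => Kproc B u ω) t

/-- The process `D` of first vertices: `D(t) = inf {u ≥ t : K u = B u}`. -/
def Dproc {Ω : Type*} (B : ℝ → Ω → ℝ) (t : ℝ) (ω : Ω) : ℝ :=
  firstVertex (fun u => B u ω) t

/-- A process `Y` is Markov (w.r.t. its natural filtration): for all `0 ≤ s ≤ t`,
`σ(Y t)` is conditionally independent of `σ(Y u : 0 ≤ u ≤ s)` given `σ(Y s)`. -/
def IsMarkov {Ω E : Type*} [mΩ : MeasurableSpace Ω] [StandardBorelSpace Ω]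
    [MeasurableSpace E] (P : Measure Ω) [IsFiniteMeasure P] (Y : ℝ → Ω → E) : Prop :=
  ∀ s t : ℝ, 0 ≤ s → s ≤ t →
    ∃ hs : MeasurableSpace.comap (Y s) inferInstance ≤ mΩ,
      CondIndep (MeasurableSpace.comap (Y s) inferInstance)
        (MeasurableSpace.comap (Y t) inferInstance)
        (natSigma Y s) hs P

/-!
With `β = -B` and `Y = z - J`, the process has moved by `-β t` while `max β < Y` and by
`‖W (t - τ)‖ - Y` once `β` has hit `Y` at time `τ`. On the event `{Y ≤ max β}` the difference of
the two displacements is `‖W (t - τ)‖ + (β t - Y)`, and by the reflection principle `β t - Y` is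
symmetric there. To first order the switch therefore adds only `φ' z * 𝔼‖W (t - τ)⁺‖` to Brownian
motion; the quadratic Taylor error lives on an event of probability `O(√t)`, so it is `O(t√t)`.

Brownian scaling gives `𝔼‖W (t - τ)⁺‖ = 𝔼 √(t - τ)⁺ * 𝔼‖Z‖` with `Z` standard Gaussian. As `max β`
up to time `s` is distributed as `√s * |N|`, the layer-cake formula turns `𝔼 √(t - τ)⁺` into an
integral over `u ∈ (0, 1]` of `√t * ℙ(Y ≤ √t * √(1 - u²) * |N|)`, which is asymptotic to
`t * γ z * (π / 4) * 𝔼|N|`. In dimension three `(π / 4) * 𝔼|N| * 𝔼‖Z‖ = 1`.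
-/

/-! ### Taylor expansion -/

lemma tendsto_sqrt_nhdsGT_zero : Tendsto (√·) (𝓝[>] 0) (𝓝[>] 0) := by
  refine tendsto_nhdsWithin_iff.2 ⟨tendsto_nhdsWithin_of_tendsto_nhds ?_, ?_⟩
  · simpa using Real.continuous_sqrt.tendsto 0
  · filter_upwards [self_mem_nhdsWithin] with t ht using Real.sqrt_pos.2 ht

section Taylor

variable {φ : ℝ → ℝ} {K : ℝ}

lemma exists_abs_deriv_deriv_le_of_hasCompactSupport (hφc : HasCompactSupport φ)
    (hφ : ContDiff ℝ 2 φ) : ∃ K, ∀ x, |deriv (deriv φ) x| ≤ K := by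
  have hcont : Continuous (deriv (deriv φ)) := by
    simpa [iteratedDeriv_succ] using hφ.continuous_iteratedDeriv 2 le_rfl
  exact hcont.bounded_above_of_compact_support hφc.deriv.deriv

lemma exists_taylor_two_eq (hφ : ContDiff ℝ 2 φ) (z x : ℝ) :
    ∃ ξ, φ (z + x) = φ z + deriv φ z * x + deriv (deriv φ) ξ / 2 * x ^ 2 := by
  obtain rfl | hx := eq_or_ne x 0
  · exact ⟨z, by simp⟩
  have hne : z ≠ z + x := by simpa using hx
  obtain ⟨ξ, -, hξ⟩ := taylor_mean_remainder_lagrange_iteratedDeriv (n := 1) hne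
    hφ.contDiffOn
  have hd : derivWithin φ (uIcc z (z + x)) z = deriv φ z :=
    (hφ.differentiable two_ne_zero z).derivWithin (uniqueDiffOn_uIcc hne z left_mem_uIcc)
  rw [taylorWithinEval_succ, taylor_within_zero_eval, iteratedDerivWithin_one, hd,
    iteratedDeriv_succ, iteratedDeriv_one] at hξ
  norm_num at hξ
  exact ⟨ξ, by linarith⟩

lemma abs_taylor_one_remainder_le (hφ : ContDiff ℝ 2 φ) (hK : ∀ x, |deriv (deriv φ) x| ≤ K)
    (z x : ℝ) : |φ (z + x) - φ z - deriv φ z * x| ≤ K * x ^ 2 := by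
  obtain ⟨ξ, hξ⟩ := exists_taylor_two_eq hφ z x
  have hrem : φ (z + x) - φ z - deriv φ z * x = deriv (deriv φ) ξ / 2 * x ^ 2 := by
    rw [hξ]; ring
  rw [hrem, abs_mul, abs_of_nonneg (sq_nonneg x), abs_div, abs_two]
  gcongr
  linarith [hK ξ, abs_nonneg (deriv (deriv φ) ξ)]

lemma tendsto_taylor_one_remainder_div_sq (hφ : ContDiff ℝ 2 φ) (z : ℝ) :
    Tendsto (fun x => (φ (z + x) - φ z - deriv φ z * x) / x ^ 2) (𝓝[≠] 0)
      (𝓝 (deriv (deriv φ) z / 2)) := by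
  have hshift : Tendsto (fun x => z + x) (𝓝[≠] 0) (𝓝 z) := by
    simpa using ((continuous_const_add z).tendsto 0).mono_left nhdsWithin_le_nhds
  have htaylor := ((nhdsWithin_univ z ▸ Real.taylor_tendsto convex_univ (mem_univ z)
    hφ.contDiffOn).comp hshift).add_const (deriv (deriv φ) z / 2)
  rw [zero_add] at htaylor
  refine htaylor.congr' ?_
  filter_upwards [self_mem_nhdsWithin] with x hx
  have hx : x ≠ 0 := hx
  simp only [Function.comp_apply, taylorWithinEval_succ, taylor_within_zero_eval,
    iteratedDerivWithin_univ, iteratedDeriv_succ, iteratedDeriv_zero]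
  norm_num
  field_simp
  ring

lemma tendsto_taylor_one_remainder_mul_div_sq (hφ : ContDiff ℝ 2 φ) (z x : ℝ) :
    Tendsto (fun s => (φ (z + s * x) - φ z - deriv φ z * (s * x)) / s ^ 2) (𝓝[>] 0)
      (𝓝 (deriv (deriv φ) z / 2 * x ^ 2)) := by
  obtain rfl | hx := eq_or_ne x 0
  · simp
  have hscale : Tendsto (· * x) (𝓝[>] (0 : ℝ)) (𝓝[≠] 0) := by
    refine tendsto_nhdsWithin_iff.2 ⟨tendsto_nhdsWithin_of_tendsto_nhds ?_, ?_⟩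
    · simpa using (tendsto_id (x := 𝓝 (0 : ℝ))).mul_const x
    · filter_upwards [self_mem_nhdsWithin] with s (hs : 0 < s) using mul_ne_zero hs.ne' hx
  refine (((tendsto_taylor_one_remainder_div_sq hφ z).comp hscale).mul_const (x ^ 2)).congr' ?_
  filter_upwards [self_mem_nhdsWithin] with s (hs : 0 < s)
  simp only [Function.comp_apply]
  field_simp

lemma abs_taylor_two_point_le (hφ : ContDiff ℝ 2 φ) (hK : ∀ x, |deriv (deriv φ) x| ≤ K) (z : ℝ)
    {y m r : ℝ} (b : ℝ) (hy : 0 ≤ y) (hym : y ≤ m) (hr : 0 ≤ r) :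
    |φ (z + (r - y)) - φ (z + -b) - deriv φ z * r - deriv φ z * (b - y)| ≤
      K * (r ^ 2 + (m ^ 2 + b ^ 2)) := by
  have hK0 : 0 ≤ K := (abs_nonneg _).trans (hK 0)
  calc |φ (z + (r - y)) - φ (z + -b) - deriv φ z * r - deriv φ z * (b - y)|
      = |(φ (z + (r - y)) - φ z - deriv φ z * (r - y)) -
          (φ (z + -b) - φ z - deriv φ z * -b)| := by ring_nf
    _ ≤ K * (r - y) ^ 2 + K * (-b) ^ 2 :=
        (abs_sub _ _).trans (add_le_add (abs_taylor_one_remainder_le hφ hK z _)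
          (abs_taylor_one_remainder_le hφ hK z _))
    _ ≤ K * (r ^ 2 + (m ^ 2 + b ^ 2)) := by
        rw [← mul_add]
        refine mul_le_mul_of_nonneg_left ?_ hK0
        nlinarith [mul_nonneg hr hy, pow_le_pow_left₀ hy hym 2]

end Taylor

/-! ### Gaussian integrals -/

section Gaussian

lemma gaussianReal_zero_toNNReal {t : ℝ} (ht : 0 ≤ t) :
    gaussianReal 0 t.toNNReal = (gaussianReal 0 1).map (√t * ·) := by
  rw [gaussianReal_map_const_mul]
  congr 1
  · simp
  · ext
    simp [Real.sq_sqrt ht, ht]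

lemma integrable_abs_pow_gaussianReal (v : NNReal) (k : ℕ) :
    Integrable (fun x => |x| ^ k) (gaussianReal 0 v) := by
  simpa using (memLp_id_gaussianReal (μ := 0) (v := v) k).integrable_norm_pow'

lemma integral_sq_gaussianReal (v : NNReal) : ∫ x, x ^ 2 ∂gaussianReal 0 v = v := by
  have h := variance_id_gaussianReal (μ := 0) (v := v)
  rwa [variance_of_integral_eq_zero (by fun_prop) (by simp)] at h

lemma tendsto_gaussianReal_Icc_atTop {r : ℝ} (hr : 0 < r) :
    Tendsto (fun k : ℕ => gaussianReal 0 k (Icc (-r) r)) atTop (𝓝 0) := by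
  have : NullSingletonClass (gaussianReal 0 1) := nullSingletonClass_gaussianReal one_ne_zero
  have hsqrt : Tendsto (fun k : ℕ => √(k : ℝ)) atTop atTop :=
    Real.tendsto_sqrt_atTop.comp tendsto_natCast_atTop_atTop
  have hradius : Tendsto (fun k : ℕ => r / √(k : ℝ)) atTop (𝓝[>] 0) :=
    tendsto_nhdsWithin_iff.2 ⟨hsqrt.const_div_atTop r,
      (hsqrt.eventually_gt_atTop 0).mono fun k hk => div_pos hr hk⟩
  have hlim := (tendsto_measure_Icc_nhdsWithin_right' (gaussianReal 0 1) 0).comp hradius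
  rw [measure_singleton] at hlim
  refine hlim.congr' ?_
  filter_upwards [hsqrt.eventually_gt_atTop 0] with k hk
  rw [← Real.toNNReal_natCast, gaussianReal_zero_toNNReal k.cast_nonneg,
    Measure.map_apply (by fun_prop) measurableSet_Icc, Function.comp_apply]
  congr 1
  ext x
  rw [zero_sub, zero_add, mem_preimage, mem_Icc, mem_Icc, ← abs_le, ← abs_le, abs_mul,
    abs_of_pos hk, le_div_iff₀' hk]

variable {E : Type*} [NormedAddCommGroup E] [InnerProductSpace ℝ E] [FiniteDimensional ℝ E]
  [MeasurableSpace E] [BorelSpace E]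

lemma stdGaussian_real : stdGaussian ℝ = gaussianReal 0 1 := by
  apply Measure.ext_of_charFun
  ext t
  simp [charFun_stdGaussian, charFun_gaussianReal, neg_div, ← Complex.ofReal_pow]

variable (E) in
lemma stdGaussian_eq_withDensity :
    stdGaussian E = volume.withDensity fun x => ENNReal.ofReal
      ((2 * Real.pi) ^ (-(Module.finrank ℝ E / 2 : ℝ)) * Real.exp (-(1 / 2) * ‖x‖ ^ 2)) := by
  have hint : Integrable fun x : E =>
      (2 * Real.pi) ^ (-(Module.finrank ℝ E / 2 : ℝ)) * Real.exp (-(1 / 2) * ‖x‖ ^ 2) := by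
    have := GaussianFourier.integrable_cexp_neg_mul_sq_norm_add (b := 1 / 2) (by norm_num) 0 (0 : E)
    refine (this.norm.congr (Eventually.of_forall fun x => ?_)).const_mul _
    simp [Complex.norm_exp, ← Complex.ofReal_pow]
  have := isFiniteMeasure_withDensity_ofReal hint.2
  apply Measure.ext_of_charFun
  ext t
  have hfourier := GaussianFourier.integral_cexp_neg_mul_sq_norm_add (b := 1 / 2) (by norm_num)
    Complex.I t
  rw [charFun_stdGaussian, charFun_apply, integral_withDensity_eq_integral_toReal_smul
    (by fun_prop) (by simp)]
  have hconst : (((2 * Real.pi) ^ (-(Module.finrank ℝ E / 2 : ℝ)) : ℝ) : ℂ) *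
      (Real.pi / (1 / 2)) ^ (Module.finrank ℝ E / 2 : ℂ) = 1 := by
    have hbase : (Real.pi / (1 / 2) : ℂ) = ((2 * Real.pi : ℝ) : ℂ) := by push_cast; ring
    have hexp : (Module.finrank ℝ E / 2 : ℂ) = ((Module.finrank ℝ E / 2 : ℝ) : ℂ) := by
      push_cast; rfl
    rw [hbase, hexp, ← Complex.ofReal_cpow (by positivity), ← Complex.ofReal_mul,
      Real.rpow_neg (by positivity), inv_mul_cancel₀ (by positivity), Complex.ofReal_one]
  calc Complex.exp (-‖t‖ ^ 2 / 2)
      = (((2 * Real.pi) ^ (-(Module.finrank ℝ E / 2 : ℝ)) : ℝ) : ℂ) *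
          ∫ x : E, Complex.exp (-(1 / 2) * ‖x‖ ^ 2 + Complex.I * inner ℝ t x) := by
        rw [hfourier, ← mul_assoc, hconst, one_mul, Complex.I_sq]
        ring_nf
    _ = _ := by
        rw [← integral_const_mul]
        congr with x
        rw [ENNReal.toReal_ofReal (by positivity), Complex.real_smul, Complex.exp_add,
          real_inner_comm, mul_comm Complex.I, ← mul_assoc]
        push_cast
        rfl

lemma sqrt_pi_pow_mul_two_pi_rpow_mul_half_rpow (d : ℕ) :
    √Real.pi ^ d * (2 * Real.pi) ^ (-(d / 2 : ℝ)) * (1 / 2) ^ (-((d : ℝ) + 1) / 2) = √2 := by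
  rw [Real.mul_rpow two_pos.le Real.pi_pos.le, one_div, Real.inv_rpow two_pos.le,
    ← Real.rpow_neg two_pos.le, Real.sqrt_eq_rpow, Real.sqrt_eq_rpow,
    ← Real.rpow_mul_natCast Real.pi_pos.le]
  calc _ = Real.pi ^ (1 / 2 * d : ℝ) * Real.pi ^ (-(d / 2 : ℝ)) *
        (2 ^ (-(d / 2 : ℝ)) * 2 ^ (-(-((d : ℝ) + 1) / 2))) := by ring
    _ = 2 ^ (1 / 2 : ℝ) := by
      rw [← Real.rpow_add Real.pi_pos, ← Real.rpow_add two_pos]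
      ring_nf
      simp

lemma integral_norm_stdGaussian [Nontrivial E] :
    ∫ x : E, ‖x‖ ∂stdGaussian E =
      √2 * Real.Gamma ((Module.finrank ℝ E + 1) / 2) / Real.Gamma (Module.finrank ℝ E / 2) := by
  set d := Module.finrank ℝ E with hd
  have hd0 : (0 : ℝ) < d := by exact_mod_cast Module.finrank_pos
  set c : ℝ := (2 * Real.pi) ^ (-(d / 2 : ℝ)) with hc
  have hball : volume.real (Metric.ball (0 : E) 1) = √Real.pi ^ d / Real.Gamma (d / 2 + 1) := by
    have : 0 < Real.Gamma (d / 2 + 1) := Real.Gamma_pos_of_pos (by positivity)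
    rw [Measure.real, InnerProductSpace.volume_ball, ENNReal.ofReal_one, one_pow, one_mul,
      ENNReal.toReal_ofReal (by positivity)]
  have hradial : ∫ r in Ioi (0 : ℝ), r ^ (d - 1) • (c * Real.exp (-(1 / 2) * r ^ 2) * r) =
      c * ((1 / 2) ^ (-((d : ℝ) + 1) / 2) * (1 / 2) * Real.Gamma ((d + 1) / 2)) := by
    rw [← integral_rpow_mul_exp_neg_mul_rpow two_pos (by linarith) (by norm_num),
      ← integral_const_mul]
    refine setIntegral_congr_fun measurableSet_Ioi fun r _ => ?_
    have hpow : r ^ d = r ^ (d - 1) * r := (pow_sub_one_mul Module.finrank_pos.ne' r).symm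
    simp only [smul_eq_mul, Real.rpow_natCast, Real.rpow_two, hpow]
    ring
  rw [stdGaussian_eq_withDensity, integral_withDensity_eq_integral_toReal_smul
    (by fun_prop) (by simp)]
  calc ∫ x : E, (ENNReal.ofReal (c * Real.exp (-(1 / 2) * ‖x‖ ^ 2))).toReal • ‖x‖
      = ∫ x : E, (fun r => c * Real.exp (-(1 / 2) * r ^ 2) * r) ‖x‖ := by
        refine integral_congr_ae (Eventually.of_forall fun x => ?_)
        simp only
        rw [ENNReal.toReal_ofReal (by positivity), smul_eq_mul]
    _ = d * (√Real.pi ^ d / Real.Gamma (d / 2 + 1) *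
          (c * ((1 / 2) ^ (-((d : ℝ) + 1) / 2) * (1 / 2) * Real.Gamma ((d + 1) / 2)))) := by
        rw [integral_fun_norm_addHaar volume fun r => c * Real.exp (-(1 / 2) * r ^ 2) * r, hball,
          ← hd, hradial, nsmul_eq_mul, smul_eq_mul]
    _ = √2 * Real.Gamma ((d + 1) / 2) / Real.Gamma (d / 2) := by
        rw [Real.Gamma_add_one (by positivity), ← sqrt_pi_pow_mul_two_pi_rpow_mul_half_rpow d]
        have := (Real.Gamma_pos_of_pos (half_pos hd0)).ne'
        field_simp
        exact hc

lemma integral_abs_gaussianReal : ∫ x, |x| ∂gaussianReal 0 1 = √2 / √Real.pi := by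
  have h := integral_norm_stdGaussian (E := ℝ)
  simpa [stdGaussian_real, ← one_div, Real.Gamma_one_half_eq] using h

end Gaussian

section SmoothFunctional

variable {φ : ℝ → ℝ} {K z : ℝ}

lemma integrable_comp_add_of_abs_deriv_deriv_le {α : Type*} [MeasurableSpace α] {μ : Measure α}
    [IsFiniteMeasure μ] (hφ : ContDiff ℝ 2 φ) (hK : ∀ x, |deriv (deriv φ) x| ≤ K) {f : α → ℝ}
    (hf : MemLp f 2 μ) : Integrable (fun a => φ (z + f a)) μ := by
  have hrem : Integrable (fun a => φ (z + f a) - φ z - deriv φ z * f a) μ := by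
    refine (hf.integrable_sq.const_mul K).mono' ?_
      (.of_forall fun a => abs_taylor_one_remainder_le hφ hK z (f a))
    have hcont : Continuous fun x => φ (z + x) - φ z - deriv φ z * x := by
      have := hφ.continuous
      fun_prop
    exact hcont.comp_aestronglyMeasurable hf.1
  refine ((hrem.add (integrable_const (φ z))).add
    ((hf.integrable one_le_two).const_mul (deriv φ z))).congr (.of_forall fun a => ?_)
  simp only [Pi.add_apply]
  ring

lemma tendsto_integral_comp_mul_sub_div (hφ : ContDiff ℝ 2 φ)
    (hK : ∀ x, |deriv (deriv φ) x| ≤ K) (z : ℝ) :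
    Tendsto (fun s => (∫ x, φ (z + s * x) ∂gaussianReal 0 1 - φ z) / s ^ 2) (𝓝[>] 0)
      (𝓝 (deriv (deriv φ) z / 2)) := by
  have hsq := (memLp_id_gaussianReal (μ := 0) (v := 1) 2).integrable_sq
  have hcont := hφ.continuous
  have hlim : Tendsto (fun s => ∫ x, (φ (z + s * x) - φ z - deriv φ z * (s * x)) / s ^ 2
      ∂gaussianReal 0 1) (𝓝[>] 0) (𝓝 (∫ x, deriv (deriv φ) z / 2 * x ^ 2 ∂gaussianReal 0 1)) := by
    refine tendsto_integral_filter_of_dominated_convergence (fun x => K * x ^ 2)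
      (.of_forall fun s => (by fun_prop : Continuous _).aestronglyMeasurable) ?_
      (hsq.const_mul K) (.of_forall fun x => ?_)
    · filter_upwards [self_mem_nhdsWithin] with s (hs : 0 < s)
      refine .of_forall fun x => ?_
      rw [Real.norm_eq_abs, abs_div, abs_of_nonneg (sq_nonneg s), div_le_iff₀ (by positivity)]
      exact (abs_taylor_one_remainder_le hφ hK z (s * x)).trans_eq (by ring)
    · exact tendsto_taylor_one_remainder_mul_div_sq hφ z x
  rw [integral_const_mul, integral_sq_gaussianReal, NNReal.coe_one, mul_one] at hlim
  refine hlim.congr fun s => ?_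
  have hφint : Integrable (fun x => φ (z + s * x)) (gaussianReal 0 1) :=
    integrable_comp_add_of_abs_deriv_deriv_le hφ hK ((memLp_id_gaussianReal 2).const_mul s)
  have hid : Integrable (fun x => deriv φ z * (s * x)) (gaussianReal 0 1) :=
    (((memLp_id_gaussianReal 1).integrable le_rfl).const_mul s).const_mul _
  have hconst : Integrable (fun _ : ℝ => φ z) (gaussianReal 0 1) := integrable_const _
  rw [integral_div, integral_sub (hφint.sub' hconst) hid, integral_sub hφint hconst,
    integral_const_mul, integral_const_mul, integral_id_gaussianReal]
  simp

end SmoothFunctional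

/-! ### Hitting times of a path -/

section Paths

/-- The maximum of the path `b` over `[0, t]`. The supremum is taken over rational times clamped
to `[0, t]`, so that it is a measurable function of the path. -/
def runningMax (b : ℝ → ℝ) (t : ℝ) : ℝ := ⨆ q : ℚ, b (max 0 (min q t))

/-- The first time in `[0, ∞)` at which the path `b` takes the value `y` (`0` if there is none). -/
def firstHit (b : ℝ → ℝ) (y : ℝ) : ℝ := sInf {s | 0 ≤ s ∧ b s = y}

/-- The time left before `t` once the path `b` has reached the level `y`, that is
`max 0 (t - firstHit b y)` when it is reached at all, written so that it is a measurable function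
of the path and `y`. -/
def remainingTime (b : ℝ → ℝ) (y t : ℝ) : ℝ :=
  (ENNReal.ofReal t - ⨅ (q : ℚ) (_ : 0 ≤ q ∧ y ≤ runningMax b q), ENNReal.ofReal q).toReal

variable {b : ℝ → ℝ} {y t : ℝ}

lemma remainingTime_nonneg : 0 ≤ remainingTime b y t := ENNReal.toReal_nonneg

lemma remainingTime_le (ht : 0 ≤ t) : remainingTime b y t ≤ t :=
  ENNReal.toReal_le_of_le_ofReal ht tsub_le_self

lemma isGreatest_runningMax (hb : ContinuousOn b (Ici 0)) (ht : 0 ≤ t) :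
    IsGreatest (b '' Icc 0 t) (runningMax b t) := by
  have hclamp : Continuous fun x : ℝ => b (max 0 (min x t)) :=
    hb.comp_continuous (by fun_prop) fun x => mem_Ici.2 (le_max_left _ _)
  have hrange : range (fun x : ℝ => b (max 0 (min x t))) = b '' Icc 0 t := by
    ext v
    constructor
    · rintro ⟨x, rfl⟩
      exact ⟨_, ⟨le_max_left _ _, max_le ht (min_le_right _ _)⟩, rfl⟩
    · rintro ⟨x, hx, rfl⟩
      exact ⟨x, by simp only [min_eq_left hx.2, max_eq_right hx.1]⟩
  have hsup : runningMax b t = sSup (b '' Icc 0 t) := by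
    rw [← hrange, sSup_range, ← Rat.denseRange_cast.ciSup' hclamp]
    exact rangeFactorization_surjective.iSup_comp
      fun x : range ((↑) : ℚ → ℝ) => b (max 0 (min x t))
  rw [hsup]
  exact (isCompact_Icc.image_of_continuousOn (hb.mono Icc_subset_Ici_self)).isGreatest_sSup
    ((nonempty_Icc.2 ht).image b)

lemma measurable_runningMax {Ω : Type*} {_ : MeasurableSpace Ω} {β : ℝ → Ω → ℝ}
    (hβ : ∀ s, 0 ≤ s → Measurable (β s)) : Measurable fun ω => runningMax (fun s => β s ω) t :=
  Measurable.iSup fun _ => hβ _ (le_max_left _ _)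

lemma measurable_remainingTime {Ω : Type*} {m : MeasurableSpace Ω} {β : ℝ → Ω → ℝ}
    (hβ : ∀ s, 0 ≤ s → Measurable (β s)) {Y : Ω → ℝ} (hY : Measurable Y) :
    Measurable fun ω => remainingTime (fun s => β s ω) (Y ω) t := by
  refine (measurable_const.sub (Measurable.iInf fun q => ?_)).ennreal_toReal
  simp only [iInf_eq_if]
  exact Measurable.ite ((MeasurableSet.const _).inter
    (measurableSet_le hY (measurable_runningMax hβ))) measurable_const measurable_const

section Hitting

variable (hb : ContinuousOn b (Ici 0)) (hy : b 0 ≤ y) (hhit : ∃ s, 0 ≤ s ∧ y ≤ b s)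
include hb hy

lemma exists_mem_Icc_eq_of_le {s : ℝ} (hs : 0 ≤ s) (hys : y ≤ b s) : ∃ u ∈ Icc 0 s, b u = y :=
  intermediate_value_Icc hs (hb.mono Icc_subset_Ici_self) ⟨hy, hys⟩

include hhit

lemma firstHit_mem : firstHit b y ∈ {s | 0 ≤ s ∧ b s = y} := by
  have hclosed : IsClosed {s | 0 ≤ s ∧ b s = y} :=
    hb.preimage_isClosed_of_isClosed isClosed_Ici (isClosed_singleton (x := y))
  obtain ⟨s, hs, hys⟩ := hhit
  obtain ⟨u, hu, hbu⟩ := exists_mem_Icc_eq_of_le hb hy hs hys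
  exact hclosed.csInf_mem ⟨u, hu.1, hbu⟩ ⟨0, fun _ h => h.1⟩

lemma firstHit_le_iff {s : ℝ} (hs : 0 ≤ s) : firstHit b y ≤ s ↔ y ≤ runningMax b s := by
  have hmax := isGreatest_runningMax hb hs
  obtain ⟨hτ, hbτ⟩ := firstHit_mem hb hy hhit
  constructor
  · intro h
    simpa only [hbτ] using hmax.2 ⟨_, ⟨hτ, h⟩, rfl⟩
  · intro h
    obtain ⟨u, hu, hbu⟩ := hmax.1
    obtain ⟨v, hv, hbv⟩ := exists_mem_Icc_eq_of_le hb hy hu.1 (hbu ▸ h)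
    have hbdd : BddBelow {s | 0 ≤ s ∧ b s = y} := ⟨0, fun _ h => h.1⟩
    exact (csInf_le hbdd ⟨hv.1, hbv⟩).trans (hv.2.trans hu.2)

lemma remainingTime_eq : remainingTime b y t = max 0 (t - firstHit b y) := by
  have hτ : 0 ≤ firstHit b y := (firstHit_mem hb hy hhit).1
  have hinf : ⨅ (q : ℚ) (_ : 0 ≤ q ∧ y ≤ runningMax b q), ENNReal.ofReal q =
      ENNReal.ofReal (firstHit b y) := by
    apply le_antisymm
    · refine le_of_forall_gt_imp_ge_of_dense fun r hr => ?_
      obtain ⟨q, hτq, hqr⟩ := ENNReal.lt_iff_exists_rat_btwn.1 hr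
      have hq : firstHit b y ≤ q := ((ENNReal.ofReal_lt_ofReal_iff_of_nonneg hτ).1 hqr.1).le
      refine (iInf₂_le q ⟨hτq, ?_⟩).trans hqr.2.le
      exact (firstHit_le_iff hb hy hhit (hτ.trans hq)).1 hq
    · refine le_iInf₂ fun q hq => ENNReal.ofReal_le_ofReal ?_
      exact (firstHit_le_iff hb hy hhit (by exact_mod_cast hq.1)).2 hq.2
  rw [remainingTime, hinf, ← ENNReal.ofReal_sub _ hτ, ENNReal.toReal_ofReal', max_comm]

lemma le_remainingTime_iff {c : ℝ} (hc : 0 < c) (hct : c ≤ t) :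
    c ≤ remainingTime b y t ↔ y ≤ runningMax b (t - c) := by
  rw [remainingTime_eq hb hy hhit, le_max_iff, or_iff_right hc.not_ge, le_sub_comm,
    firstHit_le_iff hb hy hhit (sub_nonneg.2 hct)]

lemma remainingTime_eq_zero (ht : 0 ≤ t) (h : ¬y ≤ runningMax b t) : remainingTime b y t = 0 := by
  rw [← firstHit_le_iff hb hy hhit ht, not_le] at h
  rw [remainingTime_eq hb hy hhit, max_eq_left (sub_nonpos.2 h.le)]

end Hitting

end Paths

/-! ### The reflection principle -/

section Grid

/-- `k` is the first index at which the sequence `a` exceeds the level `y`. -/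
def IsFirstAbove (a : ℕ → ℝ) (y : ℝ) (k : ℕ) : Prop := y < a k ∧ ∀ j < k, a j ≤ y

variable {a : ℕ → ℝ} {y : ℝ} {j k : ℕ}

lemma IsFirstAbove.unique (hj : IsFirstAbove a y j) (hk : IsFirstAbove a y k) : j = k := by
  by_contra h
  rcases lt_or_gt_of_ne h with h | h
  · exact (hk.2 j h).not_gt hj.1
  · exact (hj.2 k h).not_gt hk.1

lemma sum_ite_isFirstAbove {s : Finset ℕ} (hk : IsFirstAbove a y k) (hks : k ∈ s) (c : ℕ → ℝ) :
    ∑ j ∈ s, (if IsFirstAbove a y j then c j else 0) = c k := by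
  rw [Finset.sum_eq_single_of_mem k hks fun j _ hjk => if_neg fun hj => hjk (hj.unique hk),
    if_pos hk]

lemma abs_sum_ite_isFirstAbove_le {s : Finset ℕ} {c : ℕ → ℝ} {C : ℝ} (hc : ∀ k, |c k| ≤ C) :
    |∑ j ∈ s, (if IsFirstAbove a y j then c j else 0)| ≤ C := by
  by_cases h : ∃ k ∈ s, IsFirstAbove a y k
  · obtain ⟨k, hks, hk⟩ := h
    rw [sum_ite_isFirstAbove hk hks]
    exact hc k
  · push Not at h
    rw [Finset.sum_eq_zero fun k hk => if_neg (h k hk), abs_zero]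
    exact (abs_nonneg _).trans (hc 0)

lemma grid_mem_Icc {t : ℝ} {N : ℕ} (ht : 0 ≤ t) (hk : k ≤ N) : (k : ℝ) * (t / N) ∈ Icc 0 t := by
  refine ⟨by positivity, ?_⟩
  rcases N.eq_zero_or_pos with rfl | hN
  · simpa only [CharP.cast_eq_zero, div_zero, mul_zero] using ht
  · rw [mul_div_assoc', div_le_iff₀ (by positivity), mul_comm]
    gcongr

lemma exists_grid_close {t s δ : ℝ} {N : ℕ} (hs : s ∈ Icc 0 t) (hN : 0 < N)
    (hδ : t / N < δ) : ∃ k ≤ N, dist s (k * (t / N)) < δ := by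
  rcases (hs.1.trans hs.2).eq_or_lt with rfl | ht
  · refine ⟨0, N.zero_le, ?_⟩
    simpa only [le_antisymm hs.2 hs.1, CharP.cast_eq_zero, zero_mul, dist_self, zero_div] using hδ
  · have hh : 0 < t / N := by positivity
    have hle := Nat.floor_le (div_nonneg hs.1 hh.le)
    have hlt := Nat.lt_floor_add_one (s / (t / N))
    refine ⟨⌊s / (t / N)⌋₊, Nat.floor_le_of_le ?_, ?_⟩
    · rw [div_le_iff₀ hh, mul_div_cancel₀ _ (by positivity)]
      exact hs.2
    · rw [le_div_iff₀ hh] at hle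
      rw [div_lt_iff₀ hh, add_one_mul] at hlt
      rw [Real.dist_eq, abs_lt]
      constructor <;> linarith

variable {b : ℝ → ℝ} {t : ℝ}

lemma eventually_exists_isFirstAbove_grid (hb : ContinuousOn b (Ici 0)) (hy : b 0 ≤ y)
    (ht : 0 ≤ t) (hmax : y < runningMax b t) {ε : ℝ} (hε : 0 < ε) :
    ∀ᶠ N : ℕ in atTop, ∃ k ∈ Finset.range (N + 1),
      IsFirstAbove (fun j => b (j * (t / N))) y k ∧ b (k * (t / N)) < y + ε := by
  obtain ⟨s, hs, hbs⟩ := (isGreatest_runningMax hb ht).1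
  have hunif := isCompact_Icc.uniformContinuousOn_of_continuous
    (hb.mono (Icc_subset_Ici_self : Icc 0 t ⊆ Ici 0))
  obtain ⟨δ, hδ, hclose⟩ := Metric.uniformContinuousOn_iff.1 hunif (min ε (b s - y))
    (lt_min hε (by linarith))
  filter_upwards [(tendsto_const_div_atTop_nhds_zero_nat t).eventually_lt_const hδ,
    eventually_gt_atTop 0] with N hmesh hN
  have hex : ∃ k, k ≤ N ∧ y < b (k * (t / N)) := by
    obtain ⟨k, hkN, hk⟩ := exists_grid_close hs hN hmesh
    have := hclose s hs _ (grid_mem_Icc ht hkN) hk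
    rw [Real.dist_eq, lt_min_iff, abs_lt, abs_lt] at this
    exact ⟨k, hkN, by linarith [this.2.2]⟩
  obtain ⟨hkN, hky⟩ := Nat.find_spec hex
  have hmin : ∀ j < Nat.find hex, b (j * (t / N)) ≤ y := fun j hj =>
    not_lt.1 fun hyj => Nat.find_min hex hj ⟨hj.le.trans hkN, hyj⟩
  refine ⟨Nat.find hex, Finset.mem_range_succ_iff.2 hkN, ⟨hky, hmin⟩, ?_⟩
  generalize Nat.find hex = k at hkN hky hmin ⊢
  obtain _ | j := k
  · rw [CharP.cast_eq_zero, zero_mul] at hky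
    exact absurd hky hy.not_gt
  · have hstep : dist (((j + 1 : ℕ) : ℝ) * (t / N)) (j * (t / N)) < δ := by
      rw [Real.dist_eq, ← sub_mul, Nat.cast_succ, add_sub_cancel_left, one_mul,
        abs_of_nonneg (by positivity)]
      exact hmesh
    have := hclose _ (grid_mem_Icc ht hkN) _ (grid_mem_Icc ht (by omega)) hstep
    rw [Real.dist_eq, lt_min_iff, abs_lt] at this
    linarith [hmin j j.lt_succ_self]

lemma tendsto_sum_ite_isFirstAbove (hb : ContinuousOn b (Ici 0)) (hy : b 0 ≤ y) (ht : 0 ≤ t)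
    {f : ℝ → ℝ} (hf : Continuous f) :
    Tendsto (fun N : ℕ => ∑ k ∈ Finset.range (N + 1),
      if IsFirstAbove (fun j => b (j * (t / N))) y k then f (b t - b (k * (t / N))) else 0) atTop
      (𝓝 (if y < runningMax b t then f (b t - y) else 0)) := by
  split_ifs with h
  · refine Metric.tendsto_nhds.2 fun ε hε => ?_
    obtain ⟨δ, hδ, hfδ⟩ := Metric.continuous_iff.1 hf (b t - y) ε hε
    filter_upwards [eventually_exists_isFirstAbove_grid hb hy ht h hδ] with N ⟨k, hkN, hk, hky⟩
    rw [sum_ite_isFirstAbove hk hkN]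
    refine hfδ _ ?_
    rw [Real.dist_eq, sub_sub_sub_cancel_left, abs_lt]
    constructor <;> linarith [hk.1]
  · refine tendsto_const_nhds.congr fun N => (Finset.sum_eq_zero fun k hk => if_neg ?_).symm
    exact fun hk' => h (hk'.1.trans_le ((isGreatest_runningMax hb ht).2
      ⟨_, grid_mem_Icc ht (Finset.mem_range_succ_iff.1 hk), rfl⟩))

end Grid

section ProcessMeasurability

variable {Ω E : Type*} [MeasurableSpace E] {Y : ℝ → Ω → E}

lemma natSigma_le {m : MeasurableSpace Ω} (hY : ∀ t, Measurable (Y t)) (t : ℝ) :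
    natSigma Y t ≤ m :=
  iSup_le fun _ => (hY _).comap_le

lemma procSigma_le {m : MeasurableSpace Ω} (hY : ∀ t, 0 ≤ t → Measurable (Y t)) :
    procSigma Y ≤ m :=
  iSup_le fun t => (hY t t.2).comap_le

lemma measurable_natSigma {t u : ℝ} (hu : 0 ≤ u) (hut : u ≤ t) : Measurable[natSigma Y t] (Y u) :=
  measurable_iff_comap_le.2 (le_iSup (fun u : Icc (0 : ℝ) t =>
    MeasurableSpace.comap (Y u) inferInstance) ⟨u, hu, hut⟩)

lemma measurable_procSigma {u : ℝ} (hu : 0 ≤ u) : Measurable[procSigma Y] (Y u) :=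
  measurable_iff_comap_le.2 (le_iSup (fun u : Ici (0 : ℝ) =>
    MeasurableSpace.comap (Y u) inferInstance) ⟨u, hu⟩)

end ProcessMeasurability

lemma measurableSet_isFirstAbove_grid {Ω : Type*} {B : ℝ → Ω → ℝ} {y t : ℝ} {N k : ℕ}
    (ht : 0 ≤ t) : MeasurableSet[natSigma B (k * (t / N))]
      {ω | IsFirstAbove (fun j => B (j * (t / N)) ω) y k} := by
  have hmeas : ∀ j ≤ k, Measurable[natSigma B (k * (t / N))] (B (j * (t / N))) := fun j hj =>
    measurable_natSigma (by positivity) (by gcongr)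
  simp only [IsFirstAbove, ofPred_and, ofPred_forall]
  exact (measurableSet_lt measurable_const (hmeas k le_rfl)).inter
    (.iInter fun j => .iInter fun hj => measurableSet_le (hmeas j hj.le) measurable_const)

namespace IsBrownianMotion

variable {Ω : Type*} [MeasurableSpace Ω] {P : Measure Ω} {B : ℝ → Ω → ℝ}

lemma neg (hB : IsBrownianMotion P B) : IsBrownianMotion P fun t ω => -B t ω where
  measurable t := (hB.measurable t).neg
  init := hB.init.mono fun _ h => neg_eq_zero.2 h
  cont := hB.cont.mono fun _ h => h.neg
  incr_law s t hs hst := by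
    have hmeas : Measurable fun ω => B t ω - B s ω := (hB.measurable t).sub (hB.measurable s)
    have hincr : (fun ω => -B t ω - -B s ω) = (fun x => -x) ∘ fun ω => B t ω - B s ω :=
      funext fun ω => by simp only [Function.comp_apply]; ring
    rw [hincr, ← Measure.map_map (g := fun x => -x) (by fun_prop) hmeas,
      hB.incr_law s t hs hst, gaussianReal_map_neg, neg_zero]
  incr_indep s t hs hst := by
    have hincr : (fun ω => -B t ω - -B s ω) = fun ω => -(B t ω - B s ω) := funext fun ω => by ring
    refine indep_of_indep_of_le_left (indep_of_indep_of_le_right (hB.incr_indep s t hs hst) ?_) ?_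
    · exact iSup_le fun u => (measurable_natSigma u.2.1 u.2.2).neg.comap_le
    · rw [hincr]
      exact (comap_measurable fun ω => B t ω - B s ω).neg.comap_le

lemma map_eq (hB : IsBrownianMotion P B) {t : ℝ} (ht : 0 ≤ t) :
    P.map (B t) = gaussianReal 0 t.toNNReal := by
  rw [← sub_zero t, ← hB.incr_law 0 t le_rfl ht, sub_zero]
  exact Measure.map_congr (hB.init.mono fun ω hω => by simp only [hω, sub_zero])

lemma integral_comp (hB : IsBrownianMotion P B) {t : ℝ} (ht : 0 ≤ t) {f : ℝ → ℝ}
    (hf : Measurable f) : ∫ ω, f (B t ω) ∂P = ∫ x, f (√t * x) ∂gaussianReal 0 1 := by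
  rw [← integral_map (hB.measurable t).aemeasurable hf.aestronglyMeasurable, hB.map_eq ht,
    gaussianReal_zero_toNNReal ht, integral_map (by fun_prop) hf.aestronglyMeasurable]

variable {y t : ℝ}

lemma setIntegral_incr (hB : IsBrownianMotion P B) {s : ℝ} (hs : 0 ≤ s) (hst : s ≤ t)
    {F : Set Ω} (hF : MeasurableSet[natSigma B s] F) {f : ℝ → ℝ} (hf : Measurable f) :
    ∫ ω in F, f (B t ω - B s ω) ∂P =
      P.real F * ∫ x, f x ∂gaussianReal 0 (t - s).toNNReal := by
  have hincr : Measurable fun ω => B t ω - B s ω := (hB.measurable t).sub (hB.measurable s)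
  rw [(hB.incr_indep s t hs hst).symm.setIntegral_eq_mul (natSigma_le hB.measurable s)
    hincr.aemeasurable hF hf.aestronglyMeasurable, ← hB.incr_law s t hs hst,
    integral_map hincr.aemeasurable hf.aestronglyMeasurable]

lemma measurable_ite_isFirstAbove_grid (hB : IsBrownianMotion P B) (ht : 0 ≤ t) {N k : ℕ}
    {f : ℝ → ℝ} (hf : Measurable f) :
    Measurable fun ω => if IsFirstAbove (fun j => B (j * (t / N)) ω) y k
      then f (B t ω - B (k * (t / N)) ω) else 0 :=
  .ite (natSigma_le hB.measurable _ _ (measurableSet_isFirstAbove_grid ht))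
    (hf.comp ((hB.measurable _).sub (hB.measurable _))) measurable_const

lemma ae_le_runningMax (hB : IsBrownianMotion P B) (ht : 0 ≤ t) :
    ∀ᵐ ω ∂P, 0 ≤ runningMax (B · ω) t ∧ B t ω ≤ runningMax (B · ω) t := by
  filter_upwards [hB.init, hB.cont] with ω h0 hcont
  have hmax := (isGreatest_runningMax hcont ht).2
  exact ⟨h0.symm.trans_le (hmax ⟨0, left_mem_Icc.2 ht, rfl⟩), hmax ⟨t, right_mem_Icc.2 ht, rfl⟩⟩

lemma integral_ite_isFirstAbove_grid_comp_neg (hB : IsBrownianMotion P B) (ht : 0 ≤ t) {N k : ℕ}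
    (hk : k ≤ N) {f : ℝ → ℝ} (hf : Measurable f) :
    ∫ ω, (if IsFirstAbove (fun j => B (j * (t / N)) ω) y k
      then f (-(B t ω - B (k * (t / N)) ω)) else 0) ∂P =
    ∫ ω, (if IsFirstAbove (fun j => B (j * (t / N)) ω) y k
      then f (B t ω - B (k * (t / N)) ω) else 0) ∂P := by
  have hgrid := grid_mem_Icc ht hk
  have hF : MeasurableSet[natSigma B (k * (t / N))]
      {ω | IsFirstAbove (fun j => B (j * (t / N)) ω) y k} := measurableSet_isFirstAbove_grid ht
  have hset (g : ℝ → ℝ) : ∫ ω, (if IsFirstAbove (fun j => B (j * (t / N)) ω) y k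
      then g (B t ω - B (k * (t / N)) ω) else 0) ∂P =
      ∫ ω in {ω | IsFirstAbove (fun j => B (j * (t / N)) ω) y k},
        g (B t ω - B (k * (t / N)) ω) ∂P :=
    integral_indicator (natSigma_le hB.measurable _ _ hF)
  have hsymm (v : NNReal) : ∫ x, f (-x) ∂gaussianReal 0 v = ∫ x, f x ∂gaussianReal 0 v := by
    conv_rhs => rw [← neg_zero, ← gaussianReal_map_neg,
      integral_map (by fun_prop) hf.aestronglyMeasurable]
  rw [hset (fun x => f (-x)), hset f, hB.setIntegral_incr hgrid.1 hgrid.2 hF hf,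
    hB.setIntegral_incr hgrid.1 hgrid.2 hF (f := fun x => f (-x)) (by fun_prop), hsymm]

lemma identDistrib_neg (hB : IsBrownianMotion P B) (ht : 0 ≤ t) :
    IdentDistrib (fun ω => -B t ω) (B t) P P :=
  ⟨(hB.measurable t).neg.aemeasurable, (hB.measurable t).aemeasurable,
    (hB.neg.map_eq ht).trans (hB.map_eq ht).symm⟩

lemma ae_ne (hB : IsBrownianMotion P B) (ht : 0 < t) (y : ℝ) : ∀ᵐ ω ∂P, B t ω ≠ y := by
  have := nullSingletonClass_gaussianReal (μ := 0) (Real.toNNReal_pos.2 ht).ne'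
  refine ae_of_ae_map (hB.measurable t).aemeasurable (p := (· ≠ y)) ?_
  rw [hB.map_eq ht.le]
  exact compl_mem_ae_iff.2 (measure_singleton y)

lemma measure_lt_abs (hB : IsBrownianMotion P B) (hy : 0 ≤ y) (ht : 0 ≤ t) :
    P {ω | y < |B t ω|} = 2 * P {ω | y < B t ω} := by
  have hneg : P {ω | B t ω < -y} = P {ω | y < B t ω} := by
    simpa only [preimage, mem_Ioi, lt_neg] using
      (hB.identDistrib_neg ht).measure_mem_eq (measurableSet_Ioi (a := y))
  have habs : {ω | y < |B t ω|} = {ω | y < B t ω} ∪ {ω | B t ω < -y} := by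
    ext ω
    simp only [lt_abs, lt_neg, mem_ofPred_eq, mem_union]
  have hdisj : Disjoint {ω | y < B t ω} {ω | B t ω < -y} :=
    Set.disjoint_left.2 fun ω h h' => by
      rw [mem_ofPred_eq] at h h'
      linarith
  rw [habs, measure_union hdisj (measurableSet_lt (hB.measurable t) measurable_const), hneg,
    two_mul]

variable [IsProbabilityMeasure P]

lemma tendsto_integral_sum_ite_isFirstAbove (hB : IsBrownianMotion P B) (hy : 0 ≤ y)
    (ht : 0 ≤ t) {f : ℝ → ℝ} (hf : Continuous f) {C : ℝ} (hC : ∀ x, |f x| ≤ C) :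
    Tendsto (fun N : ℕ => ∑ k ∈ Finset.range (N + 1),
      ∫ ω, (if IsFirstAbove (fun j => B (j * (t / N)) ω) y k
        then f (B t ω - B (k * (t / N)) ω) else 0) ∂P) atTop
      (𝓝 (∫ ω in {ω | y < runningMax (B · ω) t}, f (B t ω - y) ∂P)) := by
  have hmeas (N k : ℕ) := (hB.measurable_ite_isFirstAbove_grid (y := y) (N := N) (k := k) ht
    hf.measurable).aestronglyMeasurable (μ := P)
  have hint (N k : ℕ) := Integrable.of_bound (hmeas N k) C (.of_forall fun ω => by
    split_ifs
    · exact hC _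
    · exact norm_zero.trans_le ((abs_nonneg _).trans (hC 0)))
  simp_rw [← integral_finsetSum _ fun k _ => hint _ k]
  rw [← integral_indicator (measurableSet_lt measurable_const
    (measurable_runningMax fun s _ => hB.measurable s))]
  refine tendsto_integral_of_dominated_convergence (fun _ => C)
    (fun N => Finset.aestronglyMeasurable_fun_sum _ fun k _ => hmeas N k) (integrable_const C)
    (fun N => .of_forall fun ω => abs_sum_ite_isFirstAbove_le fun k => hC _) ?_
  filter_upwards [hB.init, hB.cont] with ω h0 hcont
  exact tendsto_sum_ite_isFirstAbove hcont (h0.trans_le hy) ht hf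

/-- The reflection principle: discretizing the hitting time of `y`, the increment after the first
grid point above `y` is symmetric and independent of the past. -/
lemma identDistrib_sub_restrict_lt_runningMax (hB : IsBrownianMotion P B) (hy : 0 ≤ y)
    (ht : 0 ≤ t) : IdentDistrib (fun ω => y - B t ω) (fun ω => B t ω - y)
      (P.restrict {ω | y < runningMax (B · ω) t}) (P.restrict {ω | y < runningMax (B · ω) t}) := by
  have hBt := hB.measurable t
  refine ⟨by fun_prop, by fun_prop, ext_of_forall_integral_eq_of_IsFiniteMeasure fun f => ?_⟩
  rw [integral_map (by fun_prop) f.continuous.aestronglyMeasurable,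
    integral_map (by fun_prop) f.continuous.aestronglyMeasurable]
  have hlim := hB.tendsto_integral_sum_ite_isFirstAbove hy ht f.continuous f.norm_coe_le_norm
  have hlim_neg := hB.tendsto_integral_sum_ite_isFirstAbove hy ht (f.continuous.comp continuous_neg)
    fun x => f.norm_coe_le_norm (-x)
  simp only [Function.comp_apply, neg_sub (B t _) y] at hlim_neg
  refine tendsto_nhds_unique (hlim_neg.congr fun N => Finset.sum_congr rfl fun k hk => ?_) hlim
  exact hB.integral_ite_isFirstAbove_grid_comp_neg ht (Finset.mem_range_succ_iff.1 hk)
    f.continuous.measurable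

lemma setIntegral_lt_runningMax_sub_eq_zero (hB : IsBrownianMotion P B) (hy : 0 ≤ y)
    (ht : 0 ≤ t) : ∫ ω in {ω | y < runningMax (B · ω) t}, (B t ω - y) ∂P = 0 := by
  have hsymm := (hB.identDistrib_sub_restrict_lt_runningMax hy ht).integral_eq
  simp only [← neg_sub (B t _) y, integral_neg] at hsymm
  linarith

lemma measure_lt_runningMax (hB : IsBrownianMotion P B) (hy : 0 ≤ y) (ht : 0 < t) :
    P {ω | y < runningMax (B · ω) t} = 2 * P {ω | y < B t ω} := by
  have hBt := hB.measurable t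
  set A : Set Ω := {ω | y < runningMax (B · ω) t}
  have hup : (A ∩ {ω | y < B t ω} : Set Ω) =ᵐ[P] {ω | y < B t ω} := by
    filter_upwards [hB.ae_le_runningMax ht.le] with ω hω
    exact propext ⟨And.right, fun h => ⟨lt_of_lt_of_le h hω.2, h⟩⟩
  have hdown : (A ∩ {ω | B t ω < y} : Set Ω) =ᵐ[P] (A \ {ω | y < B t ω} : Set Ω) := by
    filter_upwards [hB.ae_ne ht y] with ω hω
    exact propext (and_congr_right fun _ => ⟨fun h => (lt_asymm h : ¬ y < B t ω),
      fun h => lt_of_le_of_ne (not_lt.1 h) hω⟩)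
  have hreflect : P (A ∩ {ω | B t ω < y}) = P (A ∩ {ω | y < B t ω}) := by
    have := (hB.identDistrib_sub_restrict_lt_runningMax hy ht.le).measure_mem_eq
      (measurableSet_Ioi (a := 0))
    rw [Measure.restrict_apply (measurableSet_Ioi.preimage (by fun_prop)),
      Measure.restrict_apply (measurableSet_Ioi.preimage (by fun_prop))] at this
    simpa only [preimage, mem_Ioi, sub_pos, inter_comm] using this
  rw [← measure_inter_add_sdiff A (measurableSet_lt measurable_const hBt), ← measure_congr hdown,
    hreflect, measure_congr hup, two_mul]

lemma identDistrib_runningMax (hB : IsBrownianMotion P B) (ht : 0 < t) :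
    IdentDistrib (fun ω => runningMax (B · ω) t) (fun ω => |B t ω|) P P := by
  have hM : Measurable fun ω => runningMax (B · ω) t :=
    measurable_runningMax fun s _ => hB.measurable s
  have habs : Measurable fun ω => |B t ω| := (hB.measurable t).abs
  have := Measure.isProbabilityMeasure_map (μ := P) hM.aemeasurable
  have := Measure.isProbabilityMeasure_map (μ := P) habs.aemeasurable
  refine ⟨hM.aemeasurable, habs.aemeasurable, Measure.ext_of_Iic _ _ fun y => ?_⟩
  rw [← compl_Ioi, prob_compl_eq_one_sub measurableSet_Ioi, prob_compl_eq_one_sub measurableSet_Ioi,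
    Measure.map_apply hM measurableSet_Ioi, Measure.map_apply habs measurableSet_Ioi]
  congr 1
  rcases le_or_gt 0 y with hy | hy
  · exact (hB.measure_lt_runningMax hy ht).trans (hB.measure_lt_abs hy ht.le).symm
  · refine measure_congr ?_
    filter_upwards [hB.ae_le_runningMax ht.le] with ω hω
    exact propext (iff_of_true (hy.trans_le hω.1) (hy.trans_le (abs_nonneg _)))

lemma ae_exists_ge (hB : IsBrownianMotion P B) (y : ℝ) : ∀ᵐ ω ∂P, ∃ s, 0 ≤ s ∧ y ≤ B s ω := by
  wlog hy : 0 < y generalizing y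
  · exact (this 1 one_pos).mono fun ω ⟨s, hs, hys⟩ => ⟨s, hs, by linarith⟩
  refine ae_iff.2 (nonpos_iff_eq_zero.1 ?_)
  refine ge_of_tendsto (tendsto_gaussianReal_Icc_atTop hy) ?_
  filter_upwards [eventually_gt_atTop 0] with k hk
  have hk : (0 : ℝ) < k := Nat.cast_pos.2 hk
  calc P {ω | ¬∃ s, 0 ≤ s ∧ y ≤ B s ω}
      ≤ P {ω | runningMax (B · ω) k ∈ Iic y} := by
        refine measure_mono_ae ?_
        filter_upwards [hB.cont] with ω hcont hω
        obtain ⟨s, hs, hmax⟩ := (isGreatest_runningMax hcont hk.le).1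
        exact hmax.ge.trans (not_le.1 fun h => hω ⟨s, hs.1, h⟩).le
    _ = P {ω | |B k ω| ∈ Iic y} := (hB.identDistrib_runningMax hk).measure_mem_eq measurableSet_Iic
    _ = P.map (B k) (Icc (-y) y) := by
        rw [Measure.map_apply (hB.measurable _) measurableSet_Icc]
        simp only [mem_Iic, abs_le, preimage, mem_Icc]
    _ = gaussianReal 0 k (Icc (-y) y) := by rw [hB.map_eq hk.le, Real.toNNReal_natCast]

lemma ae_forall_exists_ge (hB : IsBrownianMotion P B) :
    ∀ᵐ ω ∂P, ∀ y, ∃ s, 0 ≤ s ∧ y ≤ B s ω := by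
  filter_upwards [ae_all_iff.2 fun k : ℕ => hB.ae_exists_ge k] with ω hω y
  obtain ⟨k, hk⟩ := exists_nat_ge y
  exact (hω k).imp fun s hs => ⟨hs.1, hk.trans hs.2⟩

end IsBrownianMotion

/-! ### Brownian motion at an independent random time -/

section Independence

variable {Ω α β : Type*} [MeasurableSpace Ω] [MeasurableSpace α] [MeasurableSpace β]
  {P : Measure Ω} [IsFiniteMeasure P] {X : Ω → α} {Y : Ω → β}

lemma integral_prodMk_of_indepFun (hXY : IndepFun X Y P) (hX : Measurable X) (hY : Measurable Y)
    {f : α × β → ℝ} (hf : Measurable f) (hint : Integrable (fun ω => f (X ω, Y ω)) P) :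
    ∫ ω, f (X ω, Y ω) ∂P = ∫ ω, ∫ ω', f (X ω, Y ω') ∂P ∂P := by
  have hprod := (indepFun_iff_map_prod_eq_prod_map_map hX.aemeasurable hY.aemeasurable).1 hXY
  have hint' : Integrable f ((P.map X).prod (P.map Y)) := by
    rw [← hprod]
    exact (integrable_map_measure hf.aestronglyMeasurable (by fun_prop)).2 hint
  rw [← integral_map (φ := fun ω => (X ω, Y ω)) (by fun_prop) hf.aestronglyMeasurable, hprod,
    integral_prod f hint',
    integral_map hX.aemeasurable hf.stronglyMeasurable.integral_prod_right'.aestronglyMeasurable]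
  exact integral_congr_ae (.of_forall fun ω => integral_map hY.aemeasurable
    (by fun_prop : Measurable fun y => f (X ω, y)).aestronglyMeasurable)

lemma setIntegral_le_of_indepFun {X : Ω → ℝ} {V : Ω → α} {m h : α → ℝ} (hXV : IndepFun X V P)
    (hX : Measurable X) (hV : Measurable V) (hm : Measurable m) (hh : Measurable h)
    (hint : Integrable (fun ω => h (V ω)) P) :
    ∫ ω in {ω | X ω ≤ m (V ω)}, h (V ω) ∂P =
      ∫ ω, P.real {ω' | X ω' ≤ m (V ω)} * h (V ω) ∂P := by
  have hle : MeasurableSet {p : α × ℝ | p.2 ≤ m p.1} := measurableSet_le (by fun_prop) (by fun_prop)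
  have hA : MeasurableSet {ω | X ω ≤ m (V ω)} := measurableSet_le hX (hm.comp hV)
  rw [← integral_indicator hA]
  refine (integral_prodMk_of_indepFun (f := {p : α × ℝ | p.2 ≤ m p.1}.indicator fun p => h p.1)
    hXV.symm hV hX ((hh.comp measurable_fst).indicator hle) (hint.indicator hA)).trans
    (integral_congr_ae (.of_forall fun ω => ?_))
  calc ∫ ω', {p : α × ℝ | p.2 ≤ m p.1}.indicator (fun p => h p.1) (V ω, X ω') ∂P
      = ∫ ω', {ω' | X ω' ≤ m (V ω)}.indicator (fun _ => h (V ω)) ω' ∂P := rfl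
    _ = P.real {ω' | X ω' ≤ m (V ω)} * h (V ω) := by
        rw [integral_indicator (measurableSet_le hX measurable_const), setIntegral_const,
          smul_eq_mul]

end Independence

namespace IsBrownianMotionND

variable {Ω : Type*} [MeasurableSpace Ω] {P : Measure Ω} {n : ℕ}
  {W : ℝ → Ω → EuclideanSpace ℝ (Fin n)}

lemma measurable (hW : IsBrownianMotionND P W) (t : ℝ) : Measurable (W t) :=
  (MeasurableEquiv.toLp 2 (Fin n → ℝ)).measurable.comp
    (measurable_pi_lambda (fun ω i => W t ω i) fun i => (hW.1 i).measurable t)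

lemma ae_continuousOn (hW : IsBrownianMotionND P W) :
    ∀ᵐ ω ∂P, ContinuousOn (fun t => W t ω) (Ici 0) := by
  filter_upwards [ae_all_iff.2 fun i => (hW.1 i).cont] with ω hω
  exact (PiLp.continuous_toLp 2 _).comp_continuousOn (continuousOn_pi.2 hω)

variable {U : Ω → ℝ}

lemma ae_tendsto_ceil (hW : IsBrownianMotionND P W) (hU0 : ∀ ω, 0 ≤ U ω) :
    ∀ᵐ ω ∂P, Tendsto (fun N : ℕ => W (⌈U ω * N⌉₊ / N) ω) atTop (𝓝 (W (U ω) ω)) := by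
  filter_upwards [hW.ae_continuousOn] with ω hω
  have hgrid := (tendsto_nat_ceil_mul_div_atTop (hU0 ω)).comp
    (tendsto_natCast_atTop_atTop (R := ℝ))
  exact (hω _ (hU0 ω)).tendsto.comp (tendsto_nhdsWithin_iff.2
    ⟨hgrid, .of_forall fun N => mem_Ici.2 (by positivity)⟩)

lemma measurable_ceil (hW : IsBrownianMotionND P W) (hU : Measurable U) (N : ℕ) :
    Measurable fun ω => W (⌈U ω * N⌉₊ / N) ω := by
  have hgrid : Measurable fun p : ℕ × Ω => W (p.1 / N) p.2 :=
    measurable_from_prod_countable_right fun k => hW.measurable (k / N)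
  exact hgrid.comp ((Nat.measurable_ceil.comp (hU.mul_const _)).prodMk measurable_id)

lemma aemeasurable_randomTime (hW : IsBrownianMotionND P W) (hU : Measurable U)
    (hU0 : ∀ ω, 0 ≤ U ω) : AEMeasurable (fun ω => W (U ω) ω) P :=
  aemeasurable_of_tendsto_metrizable_ae atTop
    (fun N => (hW.measurable_ceil hU N).aemeasurable) (hW.ae_tendsto_ceil hU0)

variable [IsProbabilityMeasure P]

lemma map_eq (hW : IsBrownianMotionND P W) {t : ℝ} (ht : 0 ≤ t) :
    P.map (W t) = (stdGaussian (EuclideanSpace ℝ (Fin n))).map (√t • ·) := by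
  have hcoord : iIndepFun (fun i ω => W t ω i) P := by
    rw [iIndepFun_iff_iIndep]
    exact (iIndep_iff _ _).2 fun s f hf => hW.2.meas_biInter fun i hi =>
      (measurable_procSigma ht).comap_le _ (hf i hi)
  have hpi : P.map (fun ω i => W t ω i) =
      (Measure.pi fun _ : Fin n => gaussianReal 0 1).map (√t • ·) := by
    rw [(iIndepFun_iff_map_fun_eq_pi_map fun i => ((hW.1 i).measurable t).aemeasurable).1 hcoord]
    simp only [(hW.1 _).map_eq ht, gaussianReal_zero_toNNReal ht]
    exact (Measure.pi_map_pi fun _ => by fun_prop).symm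
  have htoLp := congrArg (Measure.map (WithLp.toLp 2)) hpi
  rw [Measure.map_map (by fun_prop) (measurable_pi_lambda _ fun i => (hW.1 i).measurable t),
    Measure.map_map (by fun_prop) (by fun_prop)] at htoLp
  rw [← map_pi_eq_stdGaussian, Measure.map_map (by fun_prop) (by fun_prop)]
  exact htoLp

open scoped BoundedContinuousFunction

lemma integral_comp_ceil (hW : IsBrownianMotionND P W) (hU : Measurable U)
    (hUW : Indep (MeasurableSpace.comap U inferInstance) (procSigma W) P)
    (f : EuclideanSpace ℝ (Fin n) →ᵇ ℝ) (N : ℕ) :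
    ∫ ω, f (W (⌈U ω * N⌉₊ / N) ω) ∂P =
      ∫ p, f (√(⌈U p.1 * N⌉₊ / N) • p.2) ∂P.prod (stdGaussian (EuclideanSpace ℝ (Fin n))) := by
  have hf := f.continuous.measurable
  have hκ : Measurable fun ω => ⌈U ω * N⌉₊ := Nat.measurable_ceil.comp (hU.mul_const _)
  have hind : IndepFun (fun ω => ⌈U ω * N⌉₊) (fun ω (k : ℕ) => W (k / N) ω) P := by
    refine indep_of_indep_of_le_left (indep_of_indep_of_le_right hUW ?_) ?_
    · exact measurable_iff_comap_le.1 (@measurable_pi_lambda _ _ _ (procSigma W) _ _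
        fun k => measurable_procSigma (by positivity))
    · exact Measurable.comap_le (Nat.measurable_ceil.comp ((comap_measurable U).mul_const _))
  have heval : Measurable fun p : ℕ × (ℕ → EuclideanSpace ℝ (Fin n)) => f (p.2 p.1) :=
    measurable_from_prod_countable_right fun k => hf.comp (measurable_pi_apply k)
  have hscale : Measurable fun p : Ω × EuclideanSpace ℝ (Fin n) =>
      f (√(⌈U p.1 * N⌉₊ / N) • p.2) := by fun_prop
  rw [integral_prodMk_of_indepFun hind hκ (measurable_pi_lambda _ fun k => hW.measurable _)
    heval (.of_bound (hf.comp (hW.measurable_ceil hU N)).aestronglyMeasurable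
      ‖f‖ (.of_forall fun ω => f.norm_coe_le_norm _)), integral_prod _
    (.of_bound hscale.aestronglyMeasurable ‖f‖ (.of_forall fun p => f.norm_coe_le_norm _))]
  refine integral_congr_ae (.of_forall fun ω => ?_)
  dsimp only
  rw [← integral_map (φ := fun x => √(⌈U ω * N⌉₊ / N) • x) (by fun_prop)
    f.continuous.aestronglyMeasurable, ← hW.map_eq (by positivity),
    integral_map (hW.measurable _).aemeasurable f.continuous.aestronglyMeasurable]

lemma map_randomTime (hW : IsBrownianMotionND P W) (hU : Measurable U) (hU0 : ∀ ω, 0 ≤ U ω)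
    (hUW : Indep (MeasurableSpace.comap U inferInstance) (procSigma W) P) :
    P.map (fun ω => W (U ω) ω) =
      (P.prod (stdGaussian (EuclideanSpace ℝ (Fin n)))).map fun p => √(U p.1) • p.2 := by
  have hWU := hW.aemeasurable_randomTime hU hU0
  have hscale : Measurable fun p : Ω × EuclideanSpace ℝ (Fin n) => √(U p.1) • p.2 := by fun_prop
  have := Measure.isProbabilityMeasure_map hWU
  have := Measure.isProbabilityMeasure_map (μ := P.prod (stdGaussian (EuclideanSpace ℝ (Fin n))))
    hscale.aemeasurable
  refine ext_of_forall_integral_eq_of_IsFiniteMeasure fun f => ?_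
  have hf := f.continuous.measurable
  rw [integral_map hWU f.continuous.aestronglyMeasurable,
    integral_map hscale.aemeasurable f.continuous.aestronglyMeasurable]
  have hpath : Tendsto (fun N : ℕ => ∫ ω, f (W (⌈U ω * N⌉₊ / N) ω) ∂P) atTop
      (𝓝 (∫ ω, f (W (U ω) ω) ∂P)) := by
    refine tendsto_integral_of_dominated_convergence (fun _ => ‖f‖)
      (fun N => (hf.comp (hW.measurable_ceil hU N)).aestronglyMeasurable)
      (integrable_const _) (fun N => .of_forall fun ω => f.norm_coe_le_norm _) ?_
    exact (hW.ae_tendsto_ceil hU0).mono fun ω hω => (f.continuous.tendsto _).comp hω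
  refine tendsto_nhds_unique (hpath.congr (hW.integral_comp_ceil hU hUW f)) ?_
  refine tendsto_integral_of_dominated_convergence (fun _ => ‖f‖)
    (fun N => (by fun_prop : Measurable _).aestronglyMeasurable)
    (integrable_const _) (fun N => .of_forall fun p => f.norm_coe_le_norm _)
    (.of_forall fun p => ?_)
  have hgrid := (tendsto_nat_ceil_mul_div_atTop (hU0 p.1)).comp
    (tendsto_natCast_atTop_atTop (R := ℝ))
  exact (f.continuous.tendsto _).comp (hgrid.sqrt.smul_const p.2)

lemma integrable_norm_pow_randomTime (hW : IsBrownianMotionND P W) (hU : Measurable U)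
    (hU0 : ∀ ω, 0 ≤ U ω) (hUW : Indep (MeasurableSpace.comap U inferInstance) (procSigma W) P)
    {k : ℕ} (hint : Integrable (fun ω => √(U ω) ^ k) P) :
    Integrable (fun ω => ‖W (U ω) ω‖ ^ k) P := by
  have hWU := hW.aemeasurable_randomTime hU hU0
  refine (integrable_map_measure (g := fun x => ‖x‖ ^ k)
    (by fun_prop : Measurable _).aestronglyMeasurable hWU).1 ?_
  rw [hW.map_randomTime hU hU0 hUW, integrable_map_measure
    (by fun_prop : Measurable _).aestronglyMeasurable (by fun_prop)]
  have hgauss := (IsGaussian.memLp_id (stdGaussian (EuclideanSpace ℝ (Fin n))) k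
    (ENNReal.natCast_ne_top k)).integrable_norm_pow'
  refine (hint.mul_prod hgauss).congr (.of_forall fun p => ?_)
  simp only [Function.comp_apply, norm_smul, mul_pow, Real.norm_of_nonneg (Real.sqrt_nonneg _),
    id_eq]

lemma integral_norm_pow_randomTime (hW : IsBrownianMotionND P W) (hU : Measurable U)
    (hU0 : ∀ ω, 0 ≤ U ω) (hUW : Indep (MeasurableSpace.comap U inferInstance) (procSigma W) P)
    (k : ℕ) :
    ∫ ω, ‖W (U ω) ω‖ ^ k ∂P =
      (∫ ω, √(U ω) ^ k ∂P) * ∫ x, ‖x‖ ^ k ∂stdGaussian (EuclideanSpace ℝ (Fin n)) := by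
  have hnorm : Measurable fun x : EuclideanSpace ℝ (Fin n) => ‖x‖ ^ k := by fun_prop
  rw [← integral_map (φ := fun ω => W (U ω) ω) (hW.aemeasurable_randomTime hU hU0)
    hnorm.aestronglyMeasurable, hW.map_randomTime hU hU0 hUW,
    integral_map (by fun_prop) hnorm.aestronglyMeasurable, ← integral_prod_mul]
  simp only [norm_smul, mul_pow, Real.norm_of_nonneg (Real.sqrt_nonneg _)]

end IsBrownianMotionND

/-! ### Hitting an independent random level -/

section RandomLevel

variable {Ω : Type*} [MeasurableSpace Ω] {P : Measure Ω} [IsProbabilityMeasure P] {Y : Ω → ℝ}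
  {g : ℝ}

lemma measurable_measureReal_le : Measurable fun m => P.real {ω | Y ω ≤ m} :=
  Monotone.measurable fun _ _ h => measureReal_mono fun _ hω => le_trans hω h

lemma exists_measureReal_le_mul
    (hg : Tendsto (fun m => P.real {ω | Y ω ≤ m} / m) (𝓝[>] 0) (𝓝 g)) :
    ∃ C, 0 ≤ C ∧ ∀ m, 0 ≤ m → P.real {ω | Y ω ≤ m} ≤ C * m := by
  obtain ⟨δ, hδ, hnear⟩ := mem_nhdsGT_iff_exists_Ioo_subset.1
    (hg.eventually (eventually_le_nhds (lt_add_one g)))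
  rw [mem_Ioi] at hδ
  have hpos : ∀ m, 0 < m → P.real {ω | Y ω ≤ m} ≤ max (g + 1) δ⁻¹ * m := by
    intro m hm
    rcases lt_or_ge m δ with hmδ | hmδ
    · exact ((div_le_iff₀ hm).1 (hnear ⟨hm, hmδ⟩)).trans (by gcongr; exact le_max_left _ _)
    · calc P.real {ω | Y ω ≤ m} ≤ 1 := measureReal_le_one
        _ ≤ δ⁻¹ * m := by rwa [inv_mul_eq_div, one_le_div hδ]
        _ ≤ max (g + 1) δ⁻¹ * m := by gcongr; exact le_max_right _ _
  refine ⟨max (g + 1) δ⁻¹, le_max_of_le_right (inv_nonneg.2 hδ.le), fun m hm => ?_⟩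
  have hright : Tendsto (max (g + 1) δ⁻¹ * ·) (𝓝[>] m) (𝓝 (max (g + 1) δ⁻¹ * m)) :=
    tendsto_nhdsWithin_of_tendsto_nhds (tendsto_id.const_mul _)
  refine ge_of_tendsto hright ?_
  filter_upwards [self_mem_nhdsWithin] with m' (hm' : m < m')
  exact (measureReal_mono fun ω (hω : Y ω ≤ m) => hω.trans hm'.le).trans
    (hpos m' (hm.trans_lt hm'))

lemma tendsto_integral_measureReal_le_mul_div {α : Type*} [MeasurableSpace α] {μ : Measure α}
    {ρ : α → ℝ} (hρ0 : ∀ a, 0 ≤ ρ a) (hρ : Integrable ρ μ)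
    (hg : Tendsto (fun m => P.real {ω | Y ω ≤ m} / m) (𝓝[>] 0) (𝓝 g)) :
    Tendsto (fun s => (∫ a, P.real {ω | Y ω ≤ s * ρ a} ∂μ) / s) (𝓝[>] 0) (𝓝 (g * ∫ a, ρ a ∂μ)) := by
  obtain ⟨C, -, hC⟩ := exists_measureReal_le_mul hg
  simp only [← integral_div, ← integral_const_mul]
  refine tendsto_integral_filter_of_dominated_convergence (fun a => C * ρ a)
    (.of_forall fun s => ?_) ?_ (hρ.const_mul C) (.of_forall fun a => ?_)
  · exact ((measurable_measureReal_le.comp_aemeasurable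
      (hρ.aemeasurable.const_mul s)).div_const s).aestronglyMeasurable
  · filter_upwards [self_mem_nhdsWithin] with s (hs : 0 < s)
    refine .of_forall fun a => ?_
    rw [Real.norm_of_nonneg (by positivity), div_le_iff₀ hs]
    exact (hC _ (mul_nonneg hs.le (hρ0 a))).trans_eq (by ring)
  · rcases (hρ0 a).eq_or_lt with ha | ha
    · have hzero : P.real {ω | Y ω ≤ 0} = 0 :=
        le_antisymm ((hC 0 le_rfl).trans_eq (mul_zero C)) measureReal_nonneg
      simp only [← ha, mul_zero, hzero, zero_div, tendsto_const_nhds]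
    · have hscale : Tendsto (fun s => s * ρ a) (𝓝[>] 0) (𝓝[>] 0) := by
        refine tendsto_nhdsWithin_iff.2 ⟨tendsto_nhdsWithin_of_tendsto_nhds ?_, ?_⟩
        · simpa using (tendsto_id (x := 𝓝 (0 : ℝ))).mul_const (ρ a)
        · filter_upwards [self_mem_nhdsWithin] with s hs using mul_pos hs ha
      refine ((hg.comp hscale).mul_const (ρ a)).congr fun s => ?_
      simp only [Function.comp_apply]
      field_simp

end RandomLevel

lemma indepFun_runningMax_prodMk {Ω : Type*} [MeasurableSpace Ω] {P : Measure Ω} {B : ℝ → Ω → ℝ}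
    {Y : Ω → ℝ} {t : ℝ} (ht : 0 ≤ t)
    (hYB : Indep (MeasurableSpace.comap Y inferInstance) (procSigma B) P) :
    IndepFun Y (fun ω => (runningMax (B · ω) t, B t ω)) P :=
  indep_of_indep_of_le_right hYB (measurable_iff_comap_le.1
    ((measurable_runningMax fun _ hs => measurable_procSigma hs).prodMk (measurable_procSigma ht)))

lemma integral_sqrt_one_sub_sq_zero_one : ∫ u in Ioc (0 : ℝ) 1, √(1 - u ^ 2) = Real.pi / 4 := by
  have hint (a b : ℝ) : IntervalIntegrable (fun x : ℝ => √(1 - x ^ 2)) volume a b :=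
    Continuous.intervalIntegrable (by fun_prop) _ _
  have hfull := integral_sqrt_one_sub_sq
  have heven := intervalIntegral.integral_comp_neg (a := 0) (b := 1) fun x : ℝ => √(1 - x ^ 2)
  rw [← intervalIntegral.integral_add_adjacent_intervals (hint (-1) 0) (hint 0 1)] at hfull
  simp only [neg_sq, neg_zero] at heven
  rw [← intervalIntegral.integral_of_le zero_le_one]
  linarith

namespace IsBrownianMotion

variable {Ω : Type*} [MeasurableSpace Ω] {P : Measure Ω} [IsProbabilityMeasure P]
  {B : ℝ → Ω → ℝ} {Y : Ω → ℝ} {g t : ℝ}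

lemma measureReal_le_runningMax (hB : IsBrownianMotion P B) (hY : Measurable Y)
    (hYB : Indep (MeasurableSpace.comap Y inferInstance) (procSigma B) P) (ht : 0 < t) :
    P.real {ω | Y ω ≤ runningMax (B · ω) t} =
      ∫ x, P.real {ω | Y ω ≤ √t * |x|} ∂gaussianReal 0 1 := by
  have hF : Measurable fun m => P.real {ω | Y ω ≤ m} := measurable_measureReal_le
  have hM : Measurable fun ω => runningMax (B · ω) t :=
    measurable_runningMax fun s _ => hB.measurable s
  calc P.real {ω | Y ω ≤ runningMax (B · ω) t}
      = ∫ ω, P.real {ω' | Y ω' ≤ runningMax (B · ω) t} ∂P := by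
        simpa using setIntegral_le_of_indepFun (h := fun _ => 1)
          (indepFun_runningMax_prodMk ht.le hYB) hY (hM.prodMk (hB.measurable t)) measurable_fst
          measurable_const (integrable_const _)
    _ = ∫ ω, P.real {ω' | Y ω' ≤ |B t ω|} ∂P :=
        ((hB.identDistrib_runningMax ht).comp hF).integral_eq
    _ = ∫ x, P.real {ω | Y ω ≤ |√t * x|} ∂gaussianReal 0 1 :=
        hB.integral_comp ht.le (hF.comp measurable_abs)
    _ = ∫ x, P.real {ω | Y ω ≤ √t * |x|} ∂gaussianReal 0 1 := by
        simp only [abs_mul, abs_of_nonneg (Real.sqrt_nonneg t)]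

lemma integral_sqrt_remainingTime_div_eq_setIntegral (hB : IsBrownianMotion P B) (hY : Measurable Y)
    (hY0 : ∀ᵐ ω ∂P, 0 ≤ Y ω) (ht : 0 < t) :
    (∫ ω, √(remainingTime (B · ω) (Y ω) t) ∂P) / t =
      (∫ u in Ioc 0 1, P.real {ω | Y ω ≤ runningMax (B · ω) (t * (1 - u ^ 2))}) / √t := by
  have hU : Measurable fun ω => remainingTime (B · ω) (Y ω) t :=
    measurable_remainingTime (fun s _ => hB.measurable s) hY
  have hV1 (ω) : √(remainingTime (B · ω) (Y ω) t / t) ≤ 1 :=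
    Real.sqrt_le_one.2 ((div_le_one ht).2 (remainingTime_le ht.le))
  have hlayer := Integrable.integral_eq_integral_Ioc_meas_le (μ := P) (M := 1)
    (f := fun ω => √(remainingTime (B · ω) (Y ω) t / t))
    (.of_bound (by fun_prop : Measurable _).aestronglyMeasurable 1 (.of_forall fun ω => by
      rw [Real.norm_of_nonneg (Real.sqrt_nonneg _)]; exact hV1 ω))
    (.of_forall fun ω => Real.sqrt_nonneg _) (.of_forall hV1)
  have hscale : ∫ ω, √(remainingTime (B · ω) (Y ω) t / t) ∂P =
      (∫ ω, √(remainingTime (B · ω) (Y ω) t) ∂P) / √t := by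
    simp only [Real.sqrt_div remainingTime_nonneg, integral_div]
  have hsqrt : ∀ a : ℝ, a / t = a / √t / √t := fun a => by rw [div_div, Real.mul_self_sqrt ht.le]
  rw [hsqrt, ← hscale, hlayer]
  congr 1
  refine setIntegral_congr_fun measurableSet_Ioc fun u hu => measureReal_congr ?_
  filter_upwards [hB.init, hB.cont, hB.ae_forall_exists_ge, hY0] with ω hinit hcont hhit hY0
  refine propext ?_
  have hut : u ^ 2 * t ≤ t := mul_le_of_le_one_left ht.le (pow_le_one₀ hu.1.le hu.2)
  calc u ≤ √(remainingTime (B · ω) (Y ω) t / t)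
      ↔ u ^ 2 * t ≤ remainingTime (B · ω) (Y ω) t := by
        rw [Real.le_sqrt' hu.1, le_div_iff₀ ht]
    _ ↔ Y ω ≤ runningMax (B · ω) (t - u ^ 2 * t) :=
        le_remainingTime_iff hcont (hinit.trans_le hY0) (hhit _) (by have := hu.1; positivity) hut
    _ ↔ Y ω ≤ runningMax (B · ω) (t * (1 - u ^ 2)) := by
        rw [mul_one_sub, mul_comm t]

lemma integral_sqrt_remainingTime_div_eq_prod (hB : IsBrownianMotion P B) (hY : Measurable Y)
    (hYB : Indep (MeasurableSpace.comap Y inferInstance) (procSigma B) P)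
    (hY0 : ∀ᵐ ω ∂P, 0 ≤ Y ω) (ht : 0 < t) :
    (∫ ω, √(remainingTime (B · ω) (Y ω) t) ∂P) / t =
      (∫ p, P.real {ω | Y ω ≤ √t * (√(1 - p.1 ^ 2) * |p.2|)}
        ∂(volume.restrict (Ioc (0 : ℝ) 1)).prod (gaussianReal 0 1)) / √t := by
  have hF : Measurable fun p : ℝ × ℝ => P.real {ω | Y ω ≤ √t * (√(1 - p.1 ^ 2) * |p.2|)} :=
    measurable_measureReal_le.comp (by fun_prop)
  have hbound (p : ℝ × ℝ) : ‖P.real {ω | Y ω ≤ √t * (√(1 - p.1 ^ 2) * |p.2|)}‖ ≤ 1 := by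
    rw [Real.norm_of_nonneg measureReal_nonneg]
    exact measureReal_le_one
  have hIoo : ∀ᵐ u ∂volume.restrict (Ioc (0 : ℝ) 1), 0 < 1 - u ^ 2 := by
    rw [← restrict_Ioo_eq_restrict_Ioc]
    filter_upwards [ae_restrict_mem measurableSet_Ioo] with u hu
    nlinarith [hu.1, hu.2]
  rw [hB.integral_sqrt_remainingTime_div_eq_setIntegral hY hY0 ht,
    integral_prod _ (.of_bound hF.aestronglyMeasurable 1 (.of_forall hbound))]
  congr 1
  refine integral_congr_ae ?_
  filter_upwards [hIoo] with u hu
  simp only [hB.measureReal_le_runningMax hY hYB (mul_pos ht hu), Real.sqrt_mul ht.le, mul_assoc]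

lemma tendsto_integral_sqrt_remainingTime_div (hB : IsBrownianMotion P B) (hY : Measurable Y)
    (hYB : Indep (MeasurableSpace.comap Y inferInstance) (procSigma B) P)
    (hY0 : ∀ᵐ ω ∂P, 0 ≤ Y ω)
    (hg : Tendsto (fun m => P.real {ω | Y ω ≤ m} / m) (𝓝[>] 0) (𝓝 g)) :
    Tendsto (fun t => (∫ ω, √(remainingTime (B · ω) (Y ω) t) ∂P) / t) (𝓝[>] 0)
      (𝓝 (g * (Real.pi / 4 * ∫ x, |x| ∂gaussianReal 0 1))) := by
  have hsqrt : IntegrableOn (fun u : ℝ => √(1 - u ^ 2)) (Ioc 0 1) :=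
    (by fun_prop : Continuous fun u : ℝ => √(1 - u ^ 2)).integrableOn_Ioc
  have habs : Integrable (fun x : ℝ => |x|) (gaussianReal 0 1) := by
    simpa using integrable_abs_pow_gaussianReal 1 1
  have hlim := (tendsto_integral_measureReal_le_mul_div (fun p => by positivity)
    (hsqrt.mul_prod habs) hg).comp tendsto_sqrt_nhdsGT_zero
  rw [integral_prod_mul (fun u : ℝ => √(1 - u ^ 2)) fun x => |x|,
    integral_sqrt_one_sub_sq_zero_one] at hlim
  refine hlim.congr' ?_
  filter_upwards [self_mem_nhdsWithin] with t ht
  exact (hB.integral_sqrt_remainingTime_div_eq_prod hY hYB hY0 ht).symm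

end IsBrownianMotion

namespace IsBrownianMotion

variable {Ω : Type*} [MeasurableSpace Ω] {P : Measure Ω}
  {B : ℝ → Ω → ℝ} {Y : Ω → ℝ} {t : ℝ}

lemma integrable_abs_pow (hB : IsBrownianMotion P B) (ht : 0 ≤ t) (k : ℕ) :
    Integrable (fun ω => |B t ω| ^ k) P := by
  refine (integrable_map_measure (g := fun x : ℝ => |x| ^ k)
    (by fun_prop : Measurable _).aestronglyMeasurable (hB.measurable t).aemeasurable).1 ?_
  rw [hB.map_eq ht]
  exact integrable_abs_pow_gaussianReal _ k

lemma memLp_two (hB : IsBrownianMotion P B) (ht : 0 ≤ t) : MemLp (B t) 2 P :=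
  (memLp_two_iff_integrable_sq (hB.measurable t).aestronglyMeasurable).2
    (by simpa using hB.integrable_abs_pow ht 2)

lemma integral_abs_pow (hB : IsBrownianMotion P B) (ht : 0 ≤ t) (k : ℕ) :
    ∫ ω, |B t ω| ^ k ∂P = √t ^ k * ∫ x, |x| ^ k ∂gaussianReal 0 1 := by
  rw [hB.integral_comp ht (f := fun x => |x| ^ k) (by fun_prop), ← integral_const_mul]
  simp only [abs_mul, mul_pow, abs_of_nonneg (Real.sqrt_nonneg t)]

variable [IsProbabilityMeasure P]

lemma identDistrib_runningMax_pow (hB : IsBrownianMotion P B) (ht : 0 < t) (k : ℕ) :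
    IdentDistrib (fun ω => runningMax (B · ω) t ^ k) (fun ω => |B t ω| ^ k) P P :=
  (hB.identDistrib_runningMax ht).comp (measurable_id.pow_const k)

lemma integrable_runningMax_pow (hB : IsBrownianMotion P B) (ht : 0 < t) (k : ℕ) :
    Integrable (fun ω => runningMax (B · ω) t ^ k) P :=
  (hB.identDistrib_runningMax_pow ht k).integrable_iff.2 (hB.integrable_abs_pow ht.le k)

lemma integrable_sq_add_sq (hB : IsBrownianMotion P B) (ht : 0 < t) :
    Integrable (fun ω => runningMax (B · ω) t ^ 2 + B t ω ^ 2) P :=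
  (hB.integrable_runningMax_pow ht 2).add (by simpa using hB.integrable_abs_pow ht.le 2)

lemma ae_runningMax_ne (hB : IsBrownianMotion P B) (ht : 0 < t) (y : ℝ) :
    ∀ᵐ ω ∂P, runningMax (B · ω) t ≠ y := by
  refine (hB.identDistrib_runningMax ht).symm.ae_snd (p := (· ≠ y))
    (measurableSet_singleton y).compl ?_
  filter_upwards [hB.ae_ne ht y, hB.ae_ne ht (-y)] with ω hω hω' h
  exact (eq_or_eq_neg_of_abs_eq h).elim hω hω'

lemma setIntegral_le_runningMax_le (hB : IsBrownianMotion P B) (hY : Measurable Y)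
    (hYB : Indep (MeasurableSpace.comap Y inferInstance) (procSigma B) P) {C : ℝ}
    (hC : ∀ m, 0 ≤ m → P.real {ω | Y ω ≤ m} ≤ C * m) (ht : 0 ≤ t) {h : ℝ × ℝ → ℝ}
    (hh : Measurable h) (hh0 : ∀ p, 0 ≤ h p)
    (hint : Integrable (fun ω => h (runningMax (B · ω) t, B t ω)) P)
    (hint' : Integrable
      (fun ω => runningMax (B · ω) t * h (runningMax (B · ω) t, B t ω)) P) :
    ∫ ω in {ω | Y ω ≤ runningMax (B · ω) t}, h (runningMax (B · ω) t, B t ω) ∂P ≤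
      C * ∫ ω, runningMax (B · ω) t * h (runningMax (B · ω) t, B t ω) ∂P := by
  have hM : Measurable fun ω => runningMax (B · ω) t :=
    measurable_runningMax fun s _ => hB.measurable s
  refine (setIntegral_le_of_indepFun (indepFun_runningMax_prodMk ht hYB) hY
    (hM.prodMk (hB.measurable t)) measurable_fst hh hint).trans_le ?_
  rw [← integral_const_mul]
  refine integral_mono_of_nonneg (.of_forall fun ω => mul_nonneg measureReal_nonneg (hh0 _))
    (hint'.const_mul C) ?_
  filter_upwards [hB.ae_le_runningMax ht] with ω hω
  exact (mul_le_mul_of_nonneg_right (hC _ hω.1) (hh0 _)).trans_eq (mul_assoc _ _ _)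

lemma measureReal_le_runningMax_le (hB : IsBrownianMotion P B) (hY : Measurable Y)
    (hYB : Indep (MeasurableSpace.comap Y inferInstance) (procSigma B) P) {C : ℝ}
    (hC : ∀ m, 0 ≤ m → P.real {ω | Y ω ≤ m} ≤ C * m) (ht : 0 < t) :
    P.real {ω | Y ω ≤ runningMax (B · ω) t} ≤ C * (∫ x, |x| ∂gaussianReal 0 1) * √t := by
  have hM : Integrable (fun ω => runningMax (B · ω) t) P := by
    simpa using hB.integrable_runningMax_pow ht 1
  have hbound := hB.setIntegral_le_runningMax_le hY hYB hC ht.le (h := fun _ => 1)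
    measurable_const (fun _ => zero_le_one) (integrable_const _) (by simpa using hM)
  have hmean : ∫ ω, runningMax (B · ω) t ∂P = √t * ∫ x, |x| ∂gaussianReal 0 1 := by
    simpa using
      (hB.identDistrib_runningMax_pow ht 1).integral_eq.trans (hB.integral_abs_pow ht.le 1)
  simp only [mul_one, hmean, setIntegral_const, smul_eq_mul] at hbound
  linarith

lemma setIntegral_sq_add_sq_le (hB : IsBrownianMotion P B) (hY : Measurable Y)
    (hYB : Indep (MeasurableSpace.comap Y inferInstance) (procSigma B) P) {C : ℝ} (hC0 : 0 ≤ C)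
    (hC : ∀ m, 0 ≤ m → P.real {ω | Y ω ≤ m} ≤ C * m) (ht : 0 < t) :
    ∫ ω in {ω | Y ω ≤ runningMax (B · ω) t}, (runningMax (B · ω) t ^ 2 + B t ω ^ 2) ∂P ≤
      C * (3 * ∫ x, |x| ^ 3 ∂gaussianReal 0 1) * (t * √t) := by
  have hM : Integrable (fun ω => 2 * runningMax (B · ω) t ^ 3) P :=
    (hB.integrable_runningMax_pow ht 3).const_mul 2
  have hBt : Integrable (fun ω => |B t ω| ^ 3) P := hB.integrable_abs_pow ht.le 3
  have hMB : Measurable fun ω => (runningMax (B · ω) t, B t ω) :=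
    (measurable_runningMax fun s _ => hB.measurable s).prodMk (hB.measurable t)
  have hdom : Integrable (fun ω => 2 * runningMax (B · ω) t ^ 3 + |B t ω| ^ 3) P :=
    hM.add hBt
  have hle : ∀ᵐ ω ∂P, |runningMax (B · ω) t * (runningMax (B · ω) t ^ 2 + B t ω ^ 2)| ≤
      2 * runningMax (B · ω) t ^ 3 + |B t ω| ^ 3 := by
    filter_upwards [hB.ae_le_runningMax ht.le] with ω hω
    have h0 := hω.1
    rw [abs_of_nonneg (by positivity), ← sq_abs (B t ω)]
    nlinarith [mul_nonneg (add_nonneg h0 (abs_nonneg (B t ω)))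
      (sq_nonneg (runningMax (B · ω) t - |B t ω|)), mul_nonneg (sq_nonneg (runningMax (B · ω) t))
      (abs_nonneg (B t ω)), abs_nonneg (B t ω)]
  have hint : Integrable
      (fun ω => runningMax (B · ω) t * (runningMax (B · ω) t ^ 2 + B t ω ^ 2)) P :=
    hdom.mono' ((by fun_prop : Measurable fun p : ℝ × ℝ => p.1 * (p.1 ^ 2 + p.2 ^ 2)).comp
      hMB).aestronglyMeasurable hle
  calc ∫ ω in {ω | Y ω ≤ runningMax (B · ω) t}, (runningMax (B · ω) t ^ 2 + B t ω ^ 2) ∂P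
      ≤ C * ∫ ω, runningMax (B · ω) t * (runningMax (B · ω) t ^ 2 + B t ω ^ 2) ∂P :=
        hB.setIntegral_le_runningMax_le hY hYB hC ht.le (h := fun p => p.1 ^ 2 + p.2 ^ 2)
          (by fun_prop) (fun p => by positivity) (hB.integrable_sq_add_sq ht) hint
    _ ≤ C * ∫ ω, (2 * runningMax (B · ω) t ^ 3 + |B t ω| ^ 3) ∂P := by
        gcongr ?_ * ?_
        exact integral_mono_ae hint hdom (hle.mono fun ω hω => (le_abs_self _).trans hω)
    _ = C * (3 * ∫ x, |x| ^ 3 ∂gaussianReal 0 1) * (t * √t) := by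
        rw [integral_add hM hBt, integral_const_mul,
          (hB.identDistrib_runningMax_pow ht 3).integral_eq, hB.integral_abs_pow ht.le,
          pow_succ, Real.sq_sqrt ht.le]
        ring

lemma integrableOn_le_runningMax_sub (hB : IsBrownianMotion P B) (hY : Measurable Y)
    (hY0 : ∀ᵐ ω ∂P, 0 ≤ Y ω) (ht : 0 < t) :
    IntegrableOn (fun ω => B t ω - Y ω) {ω | Y ω ≤ runningMax (B · ω) t} P := by
  have hM : Integrable (fun ω => runningMax (B · ω) t) P := by
    simpa using hB.integrable_runningMax_pow ht 1
  have hBt : Integrable (fun ω => |B t ω|) P := by simpa using hB.integrable_abs_pow ht.le 1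
  refine Integrable.mono' (hBt.add hM).integrableOn
    ((hB.measurable t).sub hY).aestronglyMeasurable ?_
  filter_upwards [ae_restrict_mem (measurableSet_le hY (measurable_runningMax
    fun s _ => hB.measurable s)), ae_restrict_of_ae hY0] with ω (hω : Y ω ≤ _) hY0
  calc ‖B t ω - Y ω‖ ≤ |B t ω| + |Y ω| := abs_sub _ _
    _ ≤ |B t ω| + runningMax (B · ω) t := by rw [abs_of_nonneg hY0]; gcongr

/-- Given `Y`, the reflection principle makes `B t - Y` symmetric on the event that `Y` is
reached before time `t`. -/
lemma setIntegral_le_runningMax_sub_eq_zero (hB : IsBrownianMotion P B) (hY : Measurable Y)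
    (hYB : Indep (MeasurableSpace.comap Y inferInstance) (procSigma B) P)
    (hY0 : ∀ᵐ ω ∂P, 0 ≤ Y ω) (ht : 0 < t) :
    ∫ ω in {ω | Y ω ≤ runningMax (B · ω) t}, (B t ω - Y ω) ∂P = 0 := by
  have hM : Measurable fun ω => runningMax (B · ω) t :=
    measurable_runningMax fun s _ => hB.measurable s
  have hA : MeasurableSet {ω | Y ω ≤ runningMax (B · ω) t} := measurableSet_le hY hM
  have hfix : ∀ y, 0 ≤ y →
      ∫ ω, {ω | y ≤ runningMax (B · ω) t}.indicator (fun ω => B t ω - y) ω ∂P = 0 := by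
    intro y hy
    rw [integral_indicator (measurableSet_le measurable_const hM),
      ← hB.setIntegral_lt_runningMax_sub_eq_zero hy ht.le]
    refine setIntegral_congr_set ?_
    filter_upwards [hB.ae_runningMax_ne ht y] with ω hω
    exact propext ⟨fun h => lt_of_le_of_ne h hω.symm, le_of_lt⟩
  rw [← integral_indicator hA]
  refine (integral_prodMk_of_indepFun
    (f := {p : ℝ × ℝ × ℝ | p.1 ≤ p.2.1}.indicator fun p => p.2.2 - p.1)
    (indepFun_runningMax_prodMk ht.le hYB) hY (hM.prodMk (hB.measurable t))
    ((by fun_prop : Measurable fun p : ℝ × ℝ × ℝ => p.2.2 - p.1).indicator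
      (measurableSet_le (by fun_prop) (by fun_prop)))
    ((hB.integrableOn_le_runningMax_sub hY hY0 ht).integrable_indicator hA)).trans ?_
  exact integral_eq_zero_of_ae (hY0.mono fun ω hω => hfix (Y ω) hω)

end IsBrownianMotion

/-! ### Switching at the hitting time -/

/-- The displacement at time `t` of the path that follows `-b` until `b` reaches the level `y` and
from then on sits at `‖w‖` above `-y`, where `w` is run with a clock started at that moment. -/
def switchedPath {E : Type*} [Norm E] (b : ℝ → ℝ) (y : ℝ) (w : ℝ → E) (t : ℝ) : ℝ :=
  if y ≤ runningMax b t then ‖w (remainingTime b y t)‖ - y else -b t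

section Switching

variable {Ω : Type*} [MeasurableSpace Ω] {P : Measure Ω} {n : ℕ} {B : ℝ → Ω → ℝ}
  {W : ℝ → Ω → EuclideanSpace ℝ (Fin n)} {Y : Ω → ℝ} {t : ℝ} {φ : ℝ → ℝ} {K z : ℝ}

lemma indep_comap_remainingTime
    (hind : Indep (MeasurableSpace.comap Y inferInstance ⊔ procSigma B) (procSigma W) P) :
    Indep (MeasurableSpace.comap (fun ω => remainingTime (B · ω) (Y ω) t) inferInstance)
      (procSigma W) P := by
  refine indep_of_indep_of_le_left hind (Measurable.comap_le ?_)
  exact measurable_remainingTime (fun s hs => (measurable_procSigma hs).mono le_sup_right le_rfl)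
    ((comap_measurable Y).mono le_sup_left le_rfl)

lemma aestronglyMeasurable_switchedPath (hB : IsBrownianMotion P B) (hY : Measurable Y)
    (hW : IsBrownianMotionND P W) :
    AEStronglyMeasurable (fun ω => switchedPath (B · ω) (Y ω) (W · ω) t) P := by
  have hA : MeasurableSet {ω | Y ω ≤ runningMax (B · ω) t} :=
    measurableSet_le hY (measurable_runningMax fun s _ => hB.measurable s)
  have hR := (hW.aemeasurable_randomTime (measurable_remainingTime (t := t)
    (fun s _ => hB.measurable s) hY) fun _ => remainingTime_nonneg).norm
  exact .piecewise hA (hR.sub hY.aemeasurable).aestronglyMeasurable.restrict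
    (hB.measurable t).neg.aestronglyMeasurable.restrict

variable [IsProbabilityMeasure P]

lemma ae_remainingTime_eq_zero (hB : IsBrownianMotion P B) (hY0 : ∀ᵐ ω ∂P, 0 ≤ Y ω) (ht : 0 ≤ t) :
    ∀ᵐ ω ∂P, ¬Y ω ≤ runningMax (B · ω) t → remainingTime (B · ω) (Y ω) t = 0 := by
  filter_upwards [hB.init, hB.cont, hB.ae_forall_exists_ge, hY0] with ω hinit hcont hhit hY0
  exact remainingTime_eq_zero hcont (hinit.trans_le hY0) (hhit (Y ω)) ht

lemma ae_abs_comp_switchedPath_sub_le (hB : IsBrownianMotion P B) (hY0 : ∀ᵐ ω ∂P, 0 ≤ Y ω)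
    (hW : IsBrownianMotionND P W) (hφ : ContDiff ℝ 2 φ) (hK : ∀ x, |deriv (deriv φ) x| ≤ K)
    (ht : 0 ≤ t) :
    ∀ᵐ ω ∂P, |φ (z + -B t ω) + deriv φ z * ‖W (remainingTime (B · ω) (Y ω) t) ω‖ +
        {ω | Y ω ≤ runningMax (B · ω) t}.indicator (fun ω => deriv φ z * (B t ω - Y ω)) ω -
        φ (z + switchedPath (B · ω) (Y ω) (W · ω) t)| ≤
      K * (‖W (remainingTime (B · ω) (Y ω) t) ω‖ ^ 2 +
        {ω | Y ω ≤ runningMax (B · ω) t}.indicator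
          (fun ω => runningMax (B · ω) t ^ 2 + B t ω ^ 2) ω) := by
  filter_upwards [ae_remainingTime_eq_zero hB hY0 ht, hY0, ae_all_iff.2 fun i => (hW.1 i).init]
    with ω hU hY0 hW0
  by_cases h : Y ω ≤ runningMax (B · ω) t
  · have hmem : ω ∈ {ω | Y ω ≤ runningMax (B · ω) t} := h
    rw [switchedPath, if_pos h, indicator_of_mem hmem, indicator_of_mem hmem]
    rw [abs_sub_comm, ← sub_sub, ← sub_sub]
    exact abs_taylor_two_point_le hφ hK z (B t ω) hY0 h (norm_nonneg _)
  · have hmem : ω ∉ {ω | Y ω ≤ runningMax (B · ω) t} := h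
    have hW0 : W 0 ω = 0 := PiLp.ext hW0
    rw [switchedPath, if_neg h, indicator_of_notMem hmem, indicator_of_notMem hmem, hU h, hW0]
    simp

variable (hB : IsBrownianMotion P B) (hY : Measurable Y) (hW : IsBrownianMotionND P W)
  (hind : Indep (MeasurableSpace.comap Y inferInstance ⊔ procSigma B) (procSigma W) P)
include hB hY hW hind

lemma integrable_norm_pow_remainingTime (ht : 0 ≤ t) (k : ℕ) :
    Integrable (fun ω => ‖W (remainingTime (B · ω) (Y ω) t) ω‖ ^ k) P := by
  have hU : Measurable fun ω => remainingTime (B · ω) (Y ω) t :=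
    measurable_remainingTime (fun s _ => hB.measurable s) hY
  refine hW.integrable_norm_pow_randomTime hU (fun _ => remainingTime_nonneg)
    (indep_comap_remainingTime hind) ?_
  refine .of_bound (hU.sqrt.pow_const k).aestronglyMeasurable (√t ^ k) (.of_forall fun ω => ?_)
  rw [Real.norm_of_nonneg (by positivity)]
  gcongr
  exact remainingTime_le ht

lemma integral_norm_pow_remainingTime (k : ℕ) :
    ∫ ω, ‖W (remainingTime (B · ω) (Y ω) t) ω‖ ^ k ∂P =
      (∫ ω, √(remainingTime (B · ω) (Y ω) t) ^ k ∂P) *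
        ∫ x, ‖x‖ ^ k ∂stdGaussian (EuclideanSpace ℝ (Fin n)) :=
  hW.integral_norm_pow_randomTime (measurable_remainingTime (fun s _ => hB.measurable s) hY)
    (fun _ => remainingTime_nonneg) (indep_comap_remainingTime hind) k

lemma integral_norm_sq_remainingTime_le (hY0 : ∀ᵐ ω ∂P, 0 ≤ Y ω) (ht : 0 ≤ t) :
    ∫ ω, ‖W (remainingTime (B · ω) (Y ω) t) ω‖ ^ 2 ∂P ≤
      t * P.real {ω | Y ω ≤ runningMax (B · ω) t} *
        ∫ x, ‖x‖ ^ 2 ∂stdGaussian (EuclideanSpace ℝ (Fin n)) := by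
  have hA : MeasurableSet {ω | Y ω ≤ runningMax (B · ω) t} :=
    measurableSet_le hY (measurable_runningMax fun s _ => hB.measurable s)
  rw [integral_norm_pow_remainingTime hB hY hW hind]
  gcongr ?_ * _
  calc ∫ ω, √(remainingTime (B · ω) (Y ω) t) ^ 2 ∂P
      ≤ ∫ ω, {ω | Y ω ≤ runningMax (B · ω) t}.indicator (fun _ => t) ω ∂P := by
        refine integral_mono_of_nonneg (.of_forall fun ω => by positivity)
          ((integrable_const t).indicator hA) ?_
        filter_upwards [ae_remainingTime_eq_zero hB hY0 ht] with ω hU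
        rw [Real.sq_sqrt remainingTime_nonneg]
        exact le_indicator_apply (fun _ => remainingTime_le ht) fun h => (hU h).le
    _ = t * P.real {ω | Y ω ≤ runningMax (B · ω) t} := by
        rw [integral_indicator hA, setIntegral_const, smul_eq_mul, mul_comm]

lemma abs_integral_comp_switchedPath_sub_le
    (hYB : Indep (MeasurableSpace.comap Y inferInstance) (procSigma B) P)
    (hY0 : ∀ᵐ ω ∂P, 0 ≤ Y ω) (hφ : ContDiff ℝ 2 φ) (hK : ∀ x, |deriv (deriv φ) x| ≤ K)
    (ht : 0 < t) :
    |∫ ω, φ (z + switchedPath (B · ω) (Y ω) (W · ω) t) ∂P - ∫ ω, φ (z + -B t ω) ∂P -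
        deriv φ z * ∫ ω, ‖W (remainingTime (B · ω) (Y ω) t) ω‖ ∂P| ≤
      K * (∫ ω, ‖W (remainingTime (B · ω) (Y ω) t) ω‖ ^ 2 ∂P +
        ∫ ω in {ω | Y ω ≤ runningMax (B · ω) t}, (runningMax (B · ω) t ^ 2 + B t ω ^ 2) ∂P) := by
  have hM : Measurable fun ω => runningMax (B · ω) t :=
    measurable_runningMax fun s _ => hB.measurable s
  set A : Set Ω := {ω | Y ω ≤ runningMax (B · ω) t}
  set R : Ω → ℝ := fun ω => ‖W (remainingTime (B · ω) (Y ω) t) ω‖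
  set S : Ω → ℝ := fun ω => switchedPath (B · ω) (Y ω) (W · ω) t
  set V : Ω → ℝ := A.indicator fun ω => runningMax (B · ω) t ^ 2 + B t ω ^ 2
  set X : Ω → ℝ := A.indicator fun ω => deriv φ z * (B t ω - Y ω)
  have hA : MeasurableSet A := measurableSet_le hY hM
  have hR (k : ℕ) : Integrable (fun ω => R ω ^ k) P :=
    integrable_norm_pow_remainingTime hB hY hW hind ht.le k
  have hX : Integrable X P := (integrable_indicator_iff hA).2
    ((hB.integrableOn_le_runningMax_sub hY hY0 ht).const_mul (deriv φ z))
  have hX0 : ∫ ω, X ω ∂P = 0 := by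
    rw [integral_indicator hA, integral_const_mul,
      hB.setIntegral_le_runningMax_sub_eq_zero hY hYB hY0 ht, mul_zero]
  have hV : Integrable V P := (hB.integrable_sq_add_sq ht).indicator hA
  have hdom : Integrable (fun ω => K * (R ω ^ 2 + V ω)) P := ((hR 2).add hV).const_mul K
  have hφB : Integrable (fun ω => φ (z + -B t ω)) P :=
    integrable_comp_add_of_abs_deriv_deriv_le hφ hK (hB.memLp_two ht.le).neg
  have hφR : Integrable (fun ω => deriv φ z * R ω) P := by
    simpa using (hR 1).const_mul (deriv φ z)
  have hφBR : Integrable (fun ω => φ (z + -B t ω) + deriv φ z * R ω) P := hφB.add hφR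
  have hG : Integrable (fun ω => φ (z + -B t ω) + deriv φ z * R ω + X ω) P := hφBR.add hX
  have hφS : AEStronglyMeasurable (fun ω => φ (z + S ω)) P :=
    hφ.continuous.comp_aestronglyMeasurable
      ((aestronglyMeasurable_switchedPath hB hY hW).const_add z)
  have hle : ∀ᵐ ω ∂P, |φ (z + -B t ω) + deriv φ z * R ω + X ω - φ (z + S ω)| ≤
      K * (R ω ^ 2 + V ω) := ae_abs_comp_switchedPath_sub_le hB hY0 hW hφ hK ht.le
  calc |∫ ω, φ (z + S ω) ∂P - ∫ ω, φ (z + -B t ω) ∂P - deriv φ z * ∫ ω, R ω ∂P|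
      = |∫ ω, (φ (z + -B t ω) + deriv φ z * R ω + X ω - φ (z + S ω)) ∂P| := by
        rw [integral_sub hG (integrable_of_norm_sub_le hφS hG hdom hle), integral_add hφBR hX,
          integral_add hφB hφR, hX0, integral_const_mul, add_zero, sub_sub,
          abs_sub_comm]
    _ ≤ ∫ ω, K * (R ω ^ 2 + V ω) ∂P :=
        (Real.norm_eq_abs _).symm.trans_le (norm_integral_le_of_norm_le hdom hle)
    _ = K * (∫ ω, R ω ^ 2 ∂P + ∫ ω in A, (runningMax (B · ω) t ^ 2 + B t ω ^ 2) ∂P) := by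
        rw [integral_const_mul, integral_add (hR 2) hV, integral_indicator hA]

lemma exists_abs_integral_comp_switchedPath_sub_le
    (hYB : Indep (MeasurableSpace.comap Y inferInstance) (procSigma B) P)
    (hY0 : ∀ᵐ ω ∂P, 0 ≤ Y ω) {C : ℝ} (hC0 : 0 ≤ C)
    (hC : ∀ m, 0 ≤ m → P.real {ω | Y ω ≤ m} ≤ C * m)
    (hφ : ContDiff ℝ 2 φ) (hK : ∀ x, |deriv (deriv φ) x| ≤ K) :
    ∃ L, ∀ t, 0 < t →
      |∫ ω, φ (z + switchedPath (B · ω) (Y ω) (W · ω) t) ∂P - ∫ ω, φ (z + -B t ω) ∂P -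
        deriv φ z * ∫ ω, ‖W (remainingTime (B · ω) (Y ω) t) ω‖ ∂P| ≤ L * (t * √t) := by
  refine ⟨K * (C * (∫ x, |x| ∂gaussianReal 0 1) *
    (∫ x, ‖x‖ ^ 2 ∂stdGaussian (EuclideanSpace ℝ (Fin n))) +
      C * (3 * ∫ x, |x| ^ 3 ∂gaussianReal 0 1)), fun t ht => ?_⟩
  have hK0 : 0 ≤ K := (abs_nonneg _).trans (hK 0)
  refine (abs_integral_comp_switchedPath_sub_le hB hY hW hind hYB hY0 hφ hK ht).trans ?_
  rw [mul_assoc, add_mul]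
  refine mul_le_mul_of_nonneg_left (add_le_add ?_
    (hB.setIntegral_sq_add_sq_le hY hYB hC0 hC ht)) hK0
  refine (integral_norm_sq_remainingTime_le hB hY hW hind hY0 ht.le).trans ?_
  calc t * P.real {ω | Y ω ≤ runningMax (B · ω) t} *
        ∫ x, ‖x‖ ^ 2 ∂stdGaussian (EuclideanSpace ℝ (Fin n))
      ≤ t * (C * (∫ x, |x| ∂gaussianReal 0 1) * √t) *
        ∫ x, ‖x‖ ^ 2 ∂stdGaussian (EuclideanSpace ℝ (Fin n)) := by
        gcongr
        exact hB.measureReal_le_runningMax_le hY hYB hC ht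
    _ = _ := by ring

end Switching

lemma IsBrownianMotion.tendsto_integral_comp_add_sub_div {Ω : Type*} [MeasurableSpace Ω]
    {P : Measure Ω} {B : ℝ → Ω → ℝ} (hB : IsBrownianMotion P B) {φ : ℝ → ℝ} {K : ℝ}
    (hφ : ContDiff ℝ 2 φ) (hK : ∀ x, |deriv (deriv φ) x| ≤ K) (z : ℝ) :
    Tendsto (fun t => (∫ ω, φ (z + B t ω) ∂P - φ z) / t) (𝓝[>] 0)
      (𝓝 (deriv (deriv φ) z / 2)) := by
  refine ((tendsto_integral_comp_mul_sub_div hφ hK z).comp tendsto_sqrt_nhdsGT_zero).congr' ?_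
  filter_upwards [self_mem_nhdsWithin] with t (ht : 0 < t)
  have := hφ.continuous.measurable
  rw [Function.comp_apply, Real.sq_sqrt ht.le,
    hB.integral_comp ht.le (f := fun x => φ (z + x)) (by fun_prop)]

/-- The drift that attaching a BES(`n`) process at a level of unit density creates at the starting
point: `π / 4` times `𝔼|N|` times `𝔼‖Z‖`, with `N` and `Z` standard Gaussian in dimensions `1`
and `n`. -/
def besselDrift (n : ℕ) : ℝ :=
  Real.pi / 4 * (∫ x, |x| ∂gaussianReal 0 1) * ∫ x, ‖x‖ ∂stdGaussian (EuclideanSpace ℝ (Fin n))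

lemma besselDrift_eq {n : ℕ} (hn : 0 < n) :
    besselDrift n = √Real.pi / 2 * (Real.Gamma ((n + 1) / 2) / Real.Gamma (n / 2)) := by
  have : Nonempty (Fin n) := Fin.pos_iff_nonempty.1 hn
  have hpi : √Real.pi ≠ 0 := (Real.sqrt_pos.2 Real.pi_pos).ne'
  rw [besselDrift, integral_abs_gaussianReal, integral_norm_stdGaussian, finrank_euclideanSpace_fin]
  field_simp
  rw [Real.sq_sqrt zero_le_two, Real.sq_sqrt Real.pi_nonneg]
  ring

lemma besselDrift_three : besselDrift 3 = 1 := by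
  have h2 : Real.Gamma (((3 : ℕ) + 1) / 2) = 1 := by norm_num
  have h3 : Real.Gamma ((3 : ℕ) / 2) = √Real.pi / 2 := by
    have := Real.Gamma_add_one (s := 1 / 2) (by norm_num)
    rw [Real.Gamma_one_half_eq] at this
    convert this using 1 <;> norm_num
    ring
  have hpi : √Real.pi ≠ 0 := (Real.sqrt_pos.2 Real.pi_pos).ne'
  rw [besselDrift_eq three_pos, h2, h3]
  field_simp

section Generator

variable {Ω : Type*} [MeasurableSpace Ω] {P : Measure Ω} [IsProbabilityMeasure P] {n : ℕ}
  {B : ℝ → Ω → ℝ} {W : ℝ → Ω → EuclideanSpace ℝ (Fin n)} {Y : Ω → ℝ} {φ : ℝ → ℝ} {K g : ℝ}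

lemma tendsto_integral_norm_remainingTime_div (hB : IsBrownianMotion P B) (hY : Measurable Y)
    (hW : IsBrownianMotionND P W)
    (hYB : Indep (MeasurableSpace.comap Y inferInstance) (procSigma B) P)
    (hind : Indep (MeasurableSpace.comap Y inferInstance ⊔ procSigma B) (procSigma W) P)
    (hY0 : ∀ᵐ ω ∂P, 0 ≤ Y ω)
    (hg : Tendsto (fun m => P.real {ω | Y ω ≤ m} / m) (𝓝[>] 0) (𝓝 g)) :
    Tendsto (fun t => (∫ ω, ‖W (remainingTime (B · ω) (Y ω) t) ω‖ ∂P) / t) (𝓝[>] 0)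
      (𝓝 (besselDrift n * g)) := by
  rw [besselDrift, mul_right_comm, mul_comm _ g]
  refine ((hB.tendsto_integral_sqrt_remainingTime_div hY hYB hY0 hg).mul_const _).congr fun t => ?_
  have hnorm := integral_norm_pow_remainingTime (t := t) hB hY hW hind 1
  simp only [pow_one] at hnorm
  rw [hnorm, div_mul_eq_mul_div]

lemma tendsto_integral_comp_switchedPath_sub_div (hB : IsBrownianMotion P B) (hY : Measurable Y)
    (hW : IsBrownianMotionND P W)
    (hYB : Indep (MeasurableSpace.comap Y inferInstance) (procSigma B) P)
    (hind : Indep (MeasurableSpace.comap Y inferInstance ⊔ procSigma B) (procSigma W) P)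
    (hY0 : ∀ᵐ ω ∂P, 0 ≤ Y ω)
    (hg : Tendsto (fun m => P.real {ω | Y ω ≤ m} / m) (𝓝[>] 0) (𝓝 g))
    (hφ : ContDiff ℝ 2 φ) (hK : ∀ x, |deriv (deriv φ) x| ≤ K) (z : ℝ) :
    Tendsto (fun t => (∫ ω, φ (z + switchedPath (B · ω) (Y ω) (W · ω) t) ∂P - φ z) / t) (𝓝[>] 0)
      (𝓝 (deriv (deriv φ) z / 2 + besselDrift n * g * deriv φ z)) := by
  obtain ⟨C, hC0, hC⟩ := exists_measureReal_le_mul hg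
  obtain ⟨L, hL⟩ := exists_abs_integral_comp_switchedPath_sub_le (z := z) hB hY hW hind hYB hY0
    hC0 hC hφ hK
  set S : ℝ → ℝ := fun t => ∫ ω, φ (z + switchedPath (B · ω) (Y ω) (W · ω) t) ∂P
  set N : ℝ → ℝ := fun t => ∫ ω, φ (z + -B t ω) ∂P
  set R : ℝ → ℝ := fun t => ∫ ω, ‖W (remainingTime (B · ω) (Y ω) t) ω‖ ∂P
  have herror : Tendsto (fun t => (S t - N t - deriv φ z * R t) / t) (𝓝[>] 0) (𝓝 0) := by
    have hroot : Tendsto (fun t => L * √t) (𝓝[>] 0) (𝓝 0) := by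
      simpa using ((Real.continuous_sqrt.tendsto 0).const_mul L).mono_left nhdsWithin_le_nhds
    refine squeeze_zero_norm' ?_ hroot
    filter_upwards [self_mem_nhdsWithin] with t (ht : 0 < t)
    rw [Real.norm_eq_abs, abs_div, abs_of_pos ht, div_le_iff₀ ht]
    exact (hL t ht).trans_eq (by ring)
  have hlim := (herror.add (hB.neg.tendsto_integral_comp_add_sub_div hφ hK z)).add
    ((tendsto_integral_norm_remainingTime_div hB hY hW hYB hind hY0 hg).mul_const (deriv φ z))
  rw [zero_add] at hlim
  refine hlim.congr fun t => ?_
  simp only [S, N, R]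
  ring

end Generator

lemma indep_sup_of_iIndep_three {Ω : Type*} {m₁ m₂ m₃ mΩ : MeasurableSpace Ω} {P : Measure Ω}
    (h₁ : m₁ ≤ mΩ) (h₂ : m₂ ≤ mΩ) (h₃ : m₃ ≤ mΩ) (h : iIndep ![m₁, m₂, m₃] P) :
    Indep (m₁ ⊔ m₂) m₃ P := by
  have hle : ∀ i, ![m₁, m₂, m₃] i ≤ mΩ :=
    Fin.forall_fin_succ.2 ⟨h₁, Fin.forall_fin_two.2 ⟨h₂, h₃⟩⟩
  have hdisj : Disjoint ({0, 1} : Set (Fin 3)) {2} := by simp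
  have hind := indep_iSup_of_disjoint hle h hdisj
  rwa [iSup_pair, iSup_singleton] at hind

section Density

variable {Ω : Type*} [MeasurableSpace Ω] {P : Measure Ω} {J : Ω → ℝ} {γ : ℝ → ℝ} {z : ℝ}

lemma ae_le_of_map_eq_withDensity (hJ : Measurable J)
    (hlaw : P.map J = volume.withDensity fun x => ENNReal.ofReal (γ x))
    (hγ : ∀ x, z < x → γ x = 0) : ∀ᵐ ω ∂P, J ω ≤ z := by
  refine ae_of_ae_map (p := (· ≤ z)) hJ.aemeasurable ?_
  have hcompl : {x : ℝ | ¬x ≤ z} = Ioi z := by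
    ext x
    exact not_le
  rw [ae_iff, hlaw, hcompl, withDensity_apply _ measurableSet_Ioi, setLIntegral_congr_fun
    measurableSet_Ioi fun x hx => by rw [hγ x hx, ENNReal.ofReal_zero], lintegral_zero]

lemma measure_sub_le_eq_setLIntegral_Icc (hJ : Measurable J)
    (hlaw : P.map J = volume.withDensity fun x => ENNReal.ofReal (γ x))
    (hγ : ∀ x, z < x → γ x = 0) (m : ℝ) :
    P {ω | z - J ω ≤ m} = ∫⁻ x in Icc (z - m) z, ENNReal.ofReal (γ x) := by
  rw [← withDensity_apply _ measurableSet_Icc, ← hlaw, Measure.map_apply hJ measurableSet_Icc]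
  refine measure_congr ?_
  filter_upwards [ae_le_of_map_eq_withDensity hJ hlaw hγ] with ω hω
  exact propext (sub_le_comm.trans (and_iff_left hω).symm)

lemma eventually_forall_Icc_of_nhdsLE {p : ℝ → Prop} (h : ∀ᶠ x in 𝓝[≤] z, p x) :
    ∀ᶠ m in 𝓝[>] 0, ∀ x ∈ Icc (z - m) z, p x := by
  obtain ⟨l, hl, hlz⟩ := mem_nhdsLE_iff_exists_Ioc_subset.1 h
  filter_upwards [Ioo_mem_nhdsGT (sub_pos.2 hl)] with m hm x hx
  exact hlz ⟨(lt_sub_comm.1 hm.2).trans_le hx.1, hx.2⟩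

lemma tendsto_setLIntegral_Icc_div {f : ℝ → ENNReal} (hf : ContinuousWithinAt f (Iic z) z) :
    Tendsto (fun m => (∫⁻ x in Icc (z - m) z, f x) / ENNReal.ofReal m) (𝓝[>] 0) (𝓝 (f z)) := by
  have hconst (c : ENNReal) (m : ℝ) :
      ∫⁻ _ in Icc (z - m) z, c = c * ENNReal.ofReal m := by
    rw [setLIntegral_const, Real.volume_Icc, sub_sub_cancel]
  refine tendsto_order.2 ⟨fun a ha => ?_, fun a ha => ?_⟩
  · obtain ⟨c, hac, hcf⟩ := exists_between ha
    filter_upwards [self_mem_nhdsWithin,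
      eventually_forall_Icc_of_nhdsLE (hf.eventually_const_le hcf)] with m (hm : 0 < m) hle
    refine hac.trans_le ?_
    rw [ENNReal.le_div_iff_mul_le (.inl (ENNReal.ofReal_pos.2 hm).ne') (.inl ENNReal.ofReal_ne_top),
      ← hconst]
    exact setLIntegral_mono' measurableSet_Icc hle
  · obtain ⟨c, hfc, hca⟩ := exists_between ha
    filter_upwards [self_mem_nhdsWithin,
      eventually_forall_Icc_of_nhdsLE (hf.eventually_le_const hfc)] with m (hm : 0 < m) hle
    refine lt_of_le_of_lt ?_ hca
    rw [ENNReal.div_le_iff (ENNReal.ofReal_pos.2 hm).ne' ENNReal.ofReal_ne_top, ← hconst]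
    exact setLIntegral_mono' measurableSet_Icc hle

lemma tendsto_measureReal_sub_le_div (hJ : Measurable J)
    (hlaw : P.map J = volume.withDensity fun x => ENNReal.ofReal (γ x))
    (hγ : ∀ x, z < x → γ x = 0) (hcont : ContinuousWithinAt γ (Iic z) z) (hz : 0 ≤ γ z) :
    Tendsto (fun m => P.real {ω | z - J ω ≤ m} / m) (𝓝[>] 0) (𝓝 (γ z)) := by
  have hofReal : ContinuousWithinAt (fun x => ENNReal.ofReal (γ x)) (Iic z) z :=
    ENNReal.tendsto_ofReal hcont
  have hdiv := tendsto_setLIntegral_Icc_div hofReal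
  have hlim := (ENNReal.tendsto_toReal ENNReal.ofReal_ne_top).comp hdiv
  rw [ENNReal.toReal_ofReal hz] at hlim
  refine hlim.congr' ?_
  filter_upwards [self_mem_nhdsWithin] with m (hm : 0 < m)
  rw [Function.comp_apply, ENNReal.toReal_div, ENNReal.toReal_ofReal hm.le, Measure.real,
    measure_sub_le_eq_setLIntegral_Icc hJ hlaw hγ]

end Density

section Mixture

variable {Ω : Type*} {n : ℕ}

/-- The mixture process started at `z`: it follows `z + B` until this first hits the random level
`J`, and from then on is `J` plus the norm of `W`, i.e. `J` plus a BES(`n`) process. -/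
def mixtureProcess (z : ℝ) (J : Ω → ℝ) (B : ℝ → Ω → ℝ) (W : ℝ → Ω → EuclideanSpace ℝ (Fin n))
    (t : ℝ) (ω : Ω) : ℝ :=
  if t ≤ sInf {s | 0 ≤ s ∧ B s ω = J ω - z} then z + B t ω
  else J ω + ‖W (t - sInf {s | 0 ≤ s ∧ B s ω = J ω - z}) ω‖

variable [MeasurableSpace Ω] {P : Measure Ω} [IsProbabilityMeasure P] {z : ℝ} {J : Ω → ℝ}
  {B : ℝ → Ω → ℝ} {W : ℝ → Ω → EuclideanSpace ℝ (Fin n)}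

lemma ae_mixtureProcess_eq (hB : IsBrownianMotion P B) (hW : IsBrownianMotionND P W)
    (hJz : ∀ᵐ ω ∂P, J ω ≤ z) {t : ℝ} (ht : 0 ≤ t) :
    ∀ᵐ ω ∂P, mixtureProcess z J B W t ω =
      z + switchedPath (fun s => -B s ω) (z - J ω) (W · ω) t := by
  filter_upwards [hJz, hB.neg.init, hB.neg.cont, hB.neg.ae_forall_exists_ge,
    ae_all_iff.2 fun i => (hW.1 i).init] with ω hJz hinit hcont hhit hW0
  have hW0 : W 0 ω = 0 := PiLp.ext hW0
  have hy : -B 0 ω ≤ z - J ω := hinit.trans_le (sub_nonneg.2 hJz)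
  have hτ : sInf {s | 0 ≤ s ∧ B s ω = J ω - z} = firstHit (fun s => -B s ω) (z - J ω) := by
    simp only [firstHit, neg_eq_iff_eq_neg, neg_sub]
  simp only [mixtureProcess, switchedPath, hτ, ← firstHit_le_iff hcont hy (hhit _) ht,
    remainingTime_eq hcont hy (hhit _)]
  obtain ⟨-, hbτ⟩ := firstHit_mem hcont hy (hhit _)
  rcases lt_trichotomy (firstHit (fun s => -B s ω) (z - J ω)) t with hlt | heq | hgt
  · rw [if_neg hlt.not_ge, if_pos hlt.le, max_eq_right (sub_nonneg.2 hlt.le)]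
    ring
  · rw [heq] at hbτ
    rw [if_pos heq.ge, if_pos heq.le, heq, sub_self, max_self, hW0, norm_zero]
    linarith
  · rw [if_pos hgt.le, if_neg hgt.not_ge, neg_neg]

theorem generator_of_general_mixture_general (hJ : Measurable J) (hJz : ∀ᵐ ω ∂P, J ω ≤ z) {g : ℝ}
    (hg : Tendsto (fun m => P.real {ω | z - J ω ≤ m} / m) (𝓝[>] 0) (𝓝 g))
    (hB : IsBrownianMotion P B) (hW : IsBrownianMotionND P W)
    (hindep : iIndep
      (![MeasurableSpace.comap J inferInstance, procSigma B, procSigma W]) P)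
    {φ : ℝ → ℝ} {K : ℝ} (hφ : ContDiff ℝ 2 φ) (hK : ∀ x, |deriv (deriv φ) x| ≤ K) :
    Tendsto (fun t => (∫ ω, φ (mixtureProcess z J B W t ω) ∂P - φ z) / t) (𝓝[>] 0)
      (𝓝 (deriv (deriv φ) z / 2 + besselDrift n * g * deriv φ z)) := by
  have hβσ : procSigma (fun t ω => -B t ω) ≤ procSigma B :=
    procSigma_le fun s hs => (measurable_procSigma hs).neg
  have hYσ : MeasurableSpace.comap (fun ω => z - J ω) inferInstance ≤
      MeasurableSpace.comap J inferInstance := ((comap_measurable J).const_sub z).comap_le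
  have hYB := indep_of_indep_of_le_left (indep_of_indep_of_le_right
    (hindep.indep (i := 0) (j := 1) (by decide)) hβσ) hYσ
  have hind := indep_of_indep_of_le_left (indep_sup_of_iIndep_three hJ.comap_le
    (procSigma_le fun s _ => hB.measurable s) (procSigma_le fun s _ => hW.measurable s)
    hindep) (sup_le_sup hYσ hβσ)
  have hY0 : ∀ᵐ ω ∂P, 0 ≤ z - J ω := hJz.mono fun ω => sub_nonneg.2
  have hlim := tendsto_integral_comp_switchedPath_sub_div hB.neg (hJ.const_sub z) hW hYB hind hY0
    hg hφ hK z
  refine hlim.congr' ?_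
  filter_upwards [self_mem_nhdsWithin] with t (ht : 0 < t)
  congr 2
  refine integral_congr_ae ?_
  filter_upwards [ae_mixtureProcess_eq hB hW hJz ht.le] with ω hω
  rw [hω]

end Mixture

/-- For a general mixture of BES(3) built from a bounded mixing density `γ`
on `[0, z]` that is continuous at `z` (Brownian motion from `z` until it hits the level `J`
with density `γ`, then an independent `BES(3)` from `J`), the infinitesimal generator at the
starting point `z` acts on `φ ∈ C²_c((0, ∞))` as `(1/2) φ''(z) + γ(z) φ'(z)`. -/
theorem generator_of_general_mixture {Ω : Type*} [MeasurableSpace Ω] (P : Measure Ω)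
    [IsProbabilityMeasure P] (z : ℝ) (hz : 0 < z)
    (γ : ℝ → ℝ) (hγ0 : ∀ x, 0 ≤ γ x) (hγsupp : ∀ x, x ∉ Set.Icc 0 z → γ x = 0)
    (hγbd : ∃ C, ∀ x, γ x ≤ C)
    (hγcont : ContinuousWithinAt γ (Set.Icc 0 z) z)
    (hγint : (∫ x in (0 : ℝ)..z, γ x) = 1)
    (J : Ω → ℝ) (hJmeas : Measurable J)
    (hJlaw : P.map J = volume.withDensity fun x => ENNReal.ofReal (γ x))
    (Bm : ℝ → Ω → ℝ) (hBm : IsBrownianMotion P Bm)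
    (W3 : ℝ → Ω → EuclideanSpace ℝ (Fin 3)) (hW3 : IsBrownianMotionND P W3)
    (hindep : iIndep
      (![MeasurableSpace.comap J inferInstance, procSigma Bm, procSigma W3]) P)
    (φ : ℝ → ℝ) (hφ : ContDiff ℝ 2 φ) (hφc : HasCompactSupport φ)
    (hφs : tsupport φ ⊆ Set.Ioi 0) :
    Tendsto
      (fun t => (∫ ω, φ (if t ≤ sInf {s | 0 ≤ s ∧ Bm s ω = J ω - z} then z + Bm t ω
          else J ω + ‖W3 (t - sInf {s | 0 ≤ s ∧ Bm s ω = J ω - z}) ω‖) ∂P - φ z) / t)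
      (𝓝[>] (0 : ℝ))
      (𝓝 ((1 / 2) * deriv (deriv φ) z + γ z * deriv φ z)) := by
  have hzero : ∀ x, z < x → γ x = 0 := fun x hx => hγsupp x fun h => h.2.not_gt hx
  have hg := tendsto_measureReal_sub_le_div hJmeas hJlaw hzero
    (hγcont.mono_of_mem_nhdsWithin (Icc_mem_nhdsLE hz)) (hγ0 z)
  obtain ⟨K, hK⟩ := exists_abs_deriv_deriv_le_of_hasCompactSupport hφc hφ
  have hgen := generator_of_general_mixture_general hJmeas
    (ae_le_of_map_eq_withDensity hJmeas hJlaw hzero) hg hBm hW3 hindep hφ hK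
  rwa [besselDrift_three, one_mul, ← one_div_mul_eq_div] at hgen
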